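/- arXiv:1710.10051 — 7 statements merged into one kernel-verified Lean document; each statement's English description precedes it below -/
import Mathlib

section
/- Let γ:[0,1]→ℝ² be a closed regular curve of class H². Then the penalized elastic energy satisfies F(γ) = E(γ) + L(γ) ≥ 4π, with equality attained by the circle of radius 1. -/
/-- A regular planar curve of class `H²`, recorded through its components `x, y`,
their first derivatives `xd, yd` and second derivatives `xdd, ydd` on `[0,1]`,
together with the regularity (non-vanishing speed) and the integrability of the
(squared and absolute) curvature with respect to arclength. -/
structure RegularCurve where
  x : ℝ → ℝ
  y : ℝ → ℝ
  xd : ℝ → ℝ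
  yd : ℝ → ℝ
  xdd : ℝ → ℝ
  ydd : ℝ → ℝ
  hx : ∀ t ∈ Set.Icc (0:ℝ) 1, HasDerivWithinAt x (xd t) (Set.Icc 0 1) t
  hy : ∀ t ∈ Set.Icc (0:ℝ) 1, HasDerivWithinAt y (yd t) (Set.Icc 0 1) t
  hxd : ∀ t ∈ Set.Icc (0:ℝ) 1, HasDerivWithinAt xd (xdd t) (Set.Icc 0 1) t
  hyd : ∀ t ∈ Set.Icc (0:ℝ) 1, HasDerivWithinAt yd (ydd t) (Set.Icc 0 1) t
  regular : ∀ t ∈ Set.Icc (0:ℝ) 1, xd t ^ 2 + yd t ^ 2 ≠ 0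
  intE : IntervalIntegrable
    (fun t => (xd t * ydd t - xdd t * yd t) ^ 2 /
      ((xd t ^ 2 + yd t ^ 2) ^ 2 * Real.sqrt (xd t ^ 2 + yd t ^ 2)))
    MeasureTheory.volume 0 1
  intK : IntervalIntegrable
    (fun t => |xd t * ydd t - xdd t * yd t| / (xd t ^ 2 + yd t ^ 2))
    MeasureTheory.volume 0 1

namespace RegularCurve

/-- The elastic energy `∫ k² ds`, where `k = (x'y'' - x''y')/|γ'|³` is the scalar
curvature and `ds = |γ'| dx`. -/
noncomputable def elasticEnergy (γ : RegularCurve) : ℝ :=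
  ∫ t in (0:ℝ)..1, (γ.xd t * γ.ydd t - γ.xdd t * γ.yd t) ^ 2 /
    ((γ.xd t ^ 2 + γ.yd t ^ 2) ^ 2 * Real.sqrt (γ.xd t ^ 2 + γ.yd t ^ 2))

/-- The length `∫ 1 ds`. -/
noncomputable def length (γ : RegularCurve) : ℝ :=
  ∫ t in (0:ℝ)..1, Real.sqrt (γ.xd t ^ 2 + γ.yd t ^ 2)

/-- The total absolute curvature `∫ |k| ds`. -/
noncomputable def totalAbsCurvature (γ : RegularCurve) : ℝ :=
  ∫ t in (0:ℝ)..1, |γ.xd t * γ.ydd t - γ.xdd t * γ.yd t| / (γ.xd t ^ 2 + γ.yd t ^ 2)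

/-- A curve is closed if `γ(0) = γ(1)` and the unit tangents agree, `τ(0) = τ(1)`. -/
def IsClosedCurve (γ : RegularCurve) : Prop :=
  γ.x 0 = γ.x 1 ∧ γ.y 0 = γ.y 1 ∧
  γ.xd 0 / Real.sqrt (γ.xd 0 ^ 2 + γ.yd 0 ^ 2)
    = γ.xd 1 / Real.sqrt (γ.xd 1 ^ 2 + γ.yd 1 ^ 2) ∧
  γ.yd 0 / Real.sqrt (γ.xd 0 ^ 2 + γ.yd 0 ^ 2)
    = γ.yd 1 / Real.sqrt (γ.xd 1 ^ 2 + γ.yd 1 ^ 2)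

end RegularCurve

namespace RegularCurve

/-- Continuous logarithm of a nonvanishing differentiable path in `ℂ`. -/
lemma exists_log_lift (z z' : ℝ → ℂ)
    (hz : ∀ t ∈ Set.Icc (0:ℝ) 1, HasDerivWithinAt z (z' t) (Set.Icc 0 1) t)
    (h0 : ∀ t ∈ Set.Icc (0:ℝ) 1, z t ≠ 0) :
    ∃ w : ℝ → ℂ, (∀ t ∈ Set.Icc (0:ℝ) 1, Complex.exp (w t) = z t) ∧
      ∀ t ∈ Set.Icc (0:ℝ) 1, HasDerivWithinAt w (z' t / z t) (Set.Icc 0 1) t := by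
  have hzc : ContinuousOn z (Set.Icc 0 1) := fun t ht => (hz t ht).continuousWithinAt
  let p : C(unitInterval, {z : ℂ // z ≠ 0}) :=
    ⟨fun t => ⟨z t, h0 t t.2⟩, by
      apply Continuous.subtype_mk
      exact hzc.domRestrict⟩
  obtain ⟨G, hG, -⟩ := Complex.isCoveringMap_exp.exists_path_lifts p (Complex.log (z 0)) (by
    apply Subtype.ext
    have h00 : z 0 ≠ 0 := h0 0 (by simp)
    simp [p, Complex.exp_log h00])
  let w : ℝ → ℂ := Set.IccExtend zero_le_one G
  have hwc : Continuous w := G.continuous.Icc_extend'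
  have hw : ∀ t ∈ Set.Icc (0:ℝ) 1, Complex.exp (w t) = z t := by
    intro t ht
    have := congrArg Subtype.val (congrFun hG ⟨t, ht⟩)
    simpa [w, Set.IccExtend_of_mem _ _ ht, p] using this
  refine ⟨w, hw, fun t ht => ?_⟩
  have hzt := h0 t ht
  have h1 : HasDerivWithinAt (fun s => z s / z t) (z' t / z t) (Set.Icc 0 1) t :=
    (hz t ht).div_const _
  have h2 : HasDerivWithinAt (fun s => Complex.log (z s / z t)) (z' t / z t) (Set.Icc 0 1) t := by
    have := h1.clog_real (by rw [div_self hzt]; exact Complex.one_mem_slitPlane)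
    simpa [div_self hzt] using this
  have h3 := h2.add_const (w t)
  refine h3.congr_of_eventuallyEq ?_ (by simp [div_self hzt])
  have hnear : ∀ᶠ s in nhds t, |(w s - w t).im| < Real.pi := by
    have hc : Continuous fun s => |(w s - w t).im| := by fun_prop
    have := hc.tendsto t
    exact this.eventually_lt_const (by simpa using Real.pi_pos)
  filter_upwards [nhdsWithin_le_nhds hnear, self_mem_nhdsWithin] with s hs hsI
  rw [← hw s hsI, ← hw t ht, ← Complex.exp_sub, Complex.log_exp]
  · ring
  · exact (abs_lt.1 hs).1
  · exact (abs_lt.1 hs).2.le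

lemma exists_angle (γ : RegularCurve) :
    ∃ θ : ℝ → ℝ,
      (∀ t ∈ Set.Icc (0:ℝ) 1, HasDerivWithinAt θ
        ((γ.xd t * γ.ydd t - γ.xdd t * γ.yd t) / (γ.xd t ^ 2 + γ.yd t ^ 2)) (Set.Icc 0 1) t) ∧
      (∀ t ∈ Set.Icc (0:ℝ) 1,
        γ.xd t = Real.sqrt (γ.xd t ^ 2 + γ.yd t ^ 2) * Real.cos (θ t)) ∧
      (∀ t ∈ Set.Icc (0:ℝ) 1,
        γ.yd t = Real.sqrt (γ.xd t ^ 2 + γ.yd t ^ 2) * Real.sin (θ t)) := by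
  obtain ⟨w, hw, hw'⟩ := exists_log_lift (fun t => (γ.xd t : ℂ) + γ.yd t * Complex.I)
    (fun t => (γ.xdd t : ℂ) + γ.ydd t * Complex.I)
    (fun t ht => ((γ.hxd t ht).ofReal_comp).add (((γ.hyd t ht).ofReal_comp).mul_const _))
    (fun t ht h => by
      apply γ.regular t ht
      have h1 := congrArg Complex.re h
      have h2 := congrArg Complex.im h
      simp at h1 h2
      simp [h1, h2])
  have hx : ∀ t ∈ Set.Icc (0:ℝ) 1, γ.xd t = Real.exp (w t).re * Real.cos (w t).im := by
    intro t ht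
    have := congrArg Complex.re (hw t ht)
    rw [Complex.exp_re] at this
    simpa using this.symm
  have hy : ∀ t ∈ Set.Icc (0:ℝ) 1, γ.yd t = Real.exp (w t).re * Real.sin (w t).im := by
    intro t ht
    have := congrArg Complex.im (hw t ht)
    rw [Complex.exp_im] at this
    simpa using this.symm
  have hr : ∀ t ∈ Set.Icc (0:ℝ) 1,
      Real.sqrt (γ.xd t ^ 2 + γ.yd t ^ 2) = Real.exp (w t).re := by
    intro t ht
    rw [show γ.xd t ^ 2 + γ.yd t ^ 2 = Real.exp (w t).re ^ 2 by
      rw [hx t ht, hy t ht]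
      linear_combination (Real.exp (w t).re ^ 2) * Real.sin_sq_add_cos_sq (w t).im]
    exact Real.sqrt_sq (Real.exp_pos _).le
  refine ⟨fun t => (w t).im, fun t ht => ?_, fun t ht => ?_, fun t ht => ?_⟩
  · have h := Complex.imCLM.hasFDerivAt.comp_hasDerivWithinAt t (hw' t ht)
    refine h.congr_deriv ?_
    simp [Complex.div_im, Complex.normSq_apply]
    field_simp
  · rw [hr t ht]; exact hx t ht
  · rw [hr t ht]; exact hy t ht

lemma abs_sub_le (γ : RegularCurve) {θ : ℝ → ℝ}
    (hθ : ∀ t ∈ Set.Icc (0:ℝ) 1, HasDerivWithinAt θ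
        ((γ.xd t * γ.ydd t - γ.xdd t * γ.yd t) / (γ.xd t ^ 2 + γ.yd t ^ 2)) (Set.Icc 0 1) t)
    {a b : ℝ} (ha : 0 ≤ a) (hab : a ≤ b) (hb : b ≤ 1) :
    |θ b - θ a| ≤ ∫ t in a..b,
      |γ.xd t * γ.ydd t - γ.xdd t * γ.yd t| / (γ.xd t ^ 2 + γ.yd t ^ 2) := by
  have hsub : Set.Icc a b ⊆ Set.Icc 0 1 := Set.Icc_subset_Icc ha hb
  have hc : ContinuousOn θ (Set.Icc a b) :=
    fun t ht => ((hθ t (hsub ht)).continuousWithinAt).mono hsub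
  have hd : ∀ x ∈ Set.Ioo a b, HasDerivWithinAt θ
      ((γ.xd x * γ.ydd x - γ.xdd x * γ.yd x) / (γ.xd x ^ 2 + γ.yd x ^ 2)) (Set.Ioi x) x := by
    intro x hx
    exact ((hθ x (hsub (Set.Ioo_subset_Icc_self hx))).hasDerivAt
      (Icc_mem_nhds (ha.trans_lt hx.1) (hx.2.trans_le hb))).hasDerivWithinAt
  have hi : MeasureTheory.IntegrableOn (fun t =>
      |γ.xd t * γ.ydd t - γ.xdd t * γ.yd t| / (γ.xd t ^ 2 + γ.yd t ^ 2)) (Set.Icc a b) :=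
    ((intervalIntegrable_iff_integrableOn_Icc_of_le zero_le_one).1 γ.intK).mono_set hsub
  rw [abs_le']
  constructor
  · refine intervalIntegral.sub_le_integral_of_hasDeriv_right_of_le hab hc hd hi ?_
    intro x _
    have := sq_nonneg (γ.xd x)
    have := sq_nonneg (γ.yd x)
    gcongr
    exact le_abs_self _
  · have := intervalIntegral.sub_le_integral_of_hasDeriv_right_of_le hab hc.neg
      (fun x hx => (hd x hx).neg) hi (by
        intro x _
        have := sq_nonneg (γ.xd x)
        have := sq_nonneg (γ.yd x)
        rw [← neg_div]
        gcongr
        exact neg_le_abs _)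
    simp only [Pi.neg_apply] at this
    linarith

/-- Fenchel's inequality for planar closed curves. -/
lemma two_pi_le_totalAbsCurvature (γ : RegularCurve) (hγ : γ.IsClosedCurve) :
    2 * Real.pi ≤ γ.totalAbsCurvature := by
  obtain ⟨θ, hθ, hx, hy⟩ := γ.exists_angle
  obtain ⟨h1, h2, h3, h4⟩ := hγ
  have m0 : (0:ℝ) ∈ Set.Icc (0:ℝ) 1 := by simp
  have m1 : (1:ℝ) ∈ Set.Icc (0:ℝ) 1 := by simp
  have hpos : ∀ t ∈ Set.Icc (0:ℝ) 1, 0 < Real.sqrt (γ.xd t ^ 2 + γ.yd t ^ 2) := by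
    intro t ht
    apply Real.sqrt_pos.2
    exact lt_of_le_of_ne (by positivity) (Ne.symm (γ.regular t ht))
  have ex : ∀ t ∈ Set.Icc (0:ℝ) 1,
      γ.xd t / Real.sqrt (γ.xd t ^ 2 + γ.yd t ^ 2) = Real.cos (θ t) := by
    intro t ht
    rw [div_eq_iff (hpos t ht).ne', mul_comm]
    exact hx t ht
  have ey : ∀ t ∈ Set.Icc (0:ℝ) 1,
      γ.yd t / Real.sqrt (γ.xd t ^ 2 + γ.yd t ^ 2) = Real.sin (θ t) := by
    intro t ht
    rw [div_eq_iff (hpos t ht).ne', mul_comm]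
    exact hy t ht
  rw [ex 0 m0, ex 1 m1] at h3
  rw [ey 0 m0, ey 1 m1] at h4
  have hang : ((θ 1 : ℝ) : Real.Angle) = (θ 0 : ℝ) :=
    Real.Angle.cos_sin_inj h3.symm h4.symm
  obtain ⟨n, hn⟩ := Real.Angle.angle_eq_iff_two_pi_dvd_sub.1 hang
  have htot : |θ 1 - θ 0| ≤ γ.totalAbsCurvature := γ.abs_sub_le hθ le_rfl zero_le_one le_rfl
  by_cases hn0 : n = 0
  · have heq : θ 1 = θ 0 := by
      rw [hn0] at hn
      simp at hn
      linarith
    have hθc : ContinuousOn θ (Set.Icc 0 1) := fun t ht => (hθ t ht).continuousWithinAt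
    obtain ⟨p, hp, hpmin⟩ := isCompact_Icc.exists_isMinOn ⟨0, m0⟩ hθc
    obtain ⟨q, hq, hqmax⟩ := isCompact_Icc.exists_isMaxOn ⟨0, m0⟩ hθc
    have hmin : ∀ t ∈ Set.Icc (0:ℝ) 1, θ p ≤ θ t := fun t ht => hpmin ht
    have hmax : ∀ t ∈ Set.Icc (0:ℝ) 1, θ t ≤ θ q := fun t ht => hqmax ht
    -- the tangent is not contained in an open half circle
    have hwide : Real.pi ≤ θ q - θ p := by
      by_contra hlt
      push Not at hlt
      set φ := (θ p + θ q) / 2 with hφ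
      have hder : ∀ t ∈ Set.Icc (0:ℝ) 1, HasDerivWithinAt
          (fun s => Real.cos φ * γ.x s + Real.sin φ * γ.y s)
          (Real.cos φ * γ.xd t + Real.sin φ * γ.yd t) (Set.Icc 0 1) t := fun t ht =>
        ((γ.hx t ht).const_mul _).add ((γ.hy t ht).const_mul _)
      have hmono : StrictMonoOn (fun s => Real.cos φ * γ.x s + Real.sin φ * γ.y s)
          (Set.Icc 0 1) := by
        apply strictMonoOn_of_deriv_pos (convex_Icc 0 1)
        · exact fun t ht => (hder t ht).continuousWithinAt
        · intro t ht
          rw [interior_Icc] at ht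
          have ht' := Set.Ioo_subset_Icc_self ht
          rw [((hder t ht').hasDerivAt (Icc_mem_nhds ht.1 ht.2)).deriv]
          have hc : 0 < Real.cos (θ t - φ) := by
            have := hmin t ht'
            have := hmax t ht'
            apply Real.cos_pos_of_mem_Ioo
            constructor <;> linarith
          have := mul_pos (hpos t ht') hc
          rw [Real.cos_sub] at this
          have e1 := hx t ht'
          have e2 := hy t ht'
          refine this.trans_eq ?_
          linear_combination -Real.cos φ * e1 - Real.sin φ * e2
      have := hmono m0 m1 zero_lt_one
      simp only [h1, h2] at this
      exact lt_irrefl _ this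
    have key : ∀ a b, a ∈ Set.Icc (0:ℝ) 1 → b ∈ Set.Icc (0:ℝ) 1 → a ≤ b →
        2 * |θ b - θ a| ≤ γ.totalAbsCurvature := by
      intro a b ha hb hab
      have i1 := γ.abs_sub_le hθ le_rfl ha.1 ha.2
      have i2 := γ.abs_sub_le hθ ha.1 hab hb.2
      have i3 := γ.abs_sub_le hθ hb.1 hb.2 le_rfl
      have hint : ∀ c d, c ∈ Set.Icc (0:ℝ) 1 → d ∈ Set.Icc (0:ℝ) 1 →
          IntervalIntegrable (fun t =>
            |γ.xd t * γ.ydd t - γ.xdd t * γ.yd t| / (γ.xd t ^ 2 + γ.yd t ^ 2))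
            MeasureTheory.volume c d := by
        intro c d hc hd
        apply γ.intK.mono_set
        rw [Set.uIcc_of_le (zero_le_one (α := ℝ))]
        exact Set.uIcc_subset_Icc hc hd
      have s1 := intervalIntegral.integral_add_adjacent_intervals (hint 0 a m0 ha) (hint a b ha hb)
      have s2 := intervalIntegral.integral_add_adjacent_intervals (hint 0 b m0 hb) (hint b 1 hb m1)
      have : |θ b - θ a| ≤ |θ a - θ 0| + |θ 1 - θ b| := by
        rw [heq]
        have := abs_add_le (θ a - θ 0) (θ 0 - θ b)
        rw [abs_sub_comm]
        simpa using this
      unfold totalAbsCurvature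
      linarith
    rcases le_total p q with hpq | hpq
    · have := key p q hp hq hpq
      have := le_abs_self (θ q - θ p)
      linarith
    · have := key q p hq hp hpq
      have := neg_le_abs (θ p - θ q)
      linarith
  · have : (1:ℝ) ≤ |(n:ℝ)| := by
      exact_mod_cast Int.one_le_abs hn0
    rw [hn, abs_mul, abs_of_pos Real.two_pi_pos] at htot
    nlinarith [Real.pi_pos]

lemma two_mul_totalAbsCurvature_le (γ : RegularCurve) :
    2 * γ.totalAbsCurvature ≤ γ.elasticEnergy + γ.length := by
  have hL : IntervalIntegrable (fun t => Real.sqrt (γ.xd t ^ 2 + γ.yd t ^ 2))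
      MeasureTheory.volume 0 1 := by
    apply ContinuousOn.intervalIntegrable
    rw [Set.uIcc_of_le (zero_le_one (α := ℝ))]
    have c1 : ContinuousOn γ.xd (Set.Icc 0 1) := fun t ht => (γ.hxd t ht).continuousWithinAt
    have c2 : ContinuousOn γ.yd (Set.Icc 0 1) := fun t ht => (γ.hyd t ht).continuousWithinAt
    exact ((c1.pow 2).add (c2.pow 2)).sqrt
  unfold totalAbsCurvature elasticEnergy length
  rw [← intervalIntegral.integral_add γ.intE hL, ← intervalIntegral.integral_const_mul]
  apply intervalIntegral.integral_mono_on zero_le_one (γ.intK.const_mul 2) (γ.intE.add hL)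
  intro t ht
  have hs : 0 < γ.xd t ^ 2 + γ.yd t ^ 2 :=
    lt_of_le_of_ne (by positivity) (Ne.symm (γ.regular t ht))
  set S := γ.xd t ^ 2 + γ.yd t ^ 2
  set K := γ.xd t * γ.ydd t - γ.xdd t * γ.yd t
  obtain ⟨r, hr, hrS⟩ : ∃ r : ℝ, 0 < r ∧ S = r ^ 2 :=
    ⟨Real.sqrt S, Real.sqrt_pos.2 hs, (Real.sq_sqrt hs.le).symm⟩
  rw [hrS, Real.sqrt_sq hr.le, ← sq_abs K]
  have : |K| ^ 2 / ((r ^ 2) ^ 2 * r) + r - 2 * (|K| / r ^ 2) = (|K| / r ^ 2 - r) ^ 2 / r := by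
    field_simp
    ring
  have : 0 ≤ (|K| / r ^ 2 - r) ^ 2 / r := by positivity
  linarith

/-- The unit circle. -/
noncomputable def unitCircle : RegularCurve where
  x t := Real.cos (2 * Real.pi * t)
  y t := Real.sin (2 * Real.pi * t)
  xd t := -(2 * Real.pi) * Real.sin (2 * Real.pi * t)
  yd t := 2 * Real.pi * Real.cos (2 * Real.pi * t)
  xdd t := -(2 * Real.pi) ^ 2 * Real.cos (2 * Real.pi * t)
  ydd t := -(2 * Real.pi) ^ 2 * Real.sin (2 * Real.pi * t)
  hx t _ := by
    have h := (((hasDerivAt_id t).const_mul (2 * Real.pi)).cos).hasDerivWithinAt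
      (s := Set.Icc 0 1)
    refine h.congr_deriv ?_
    simp; ring
  hy t _ := by
    have h := (((hasDerivAt_id t).const_mul (2 * Real.pi)).sin).hasDerivWithinAt
      (s := Set.Icc 0 1)
    refine h.congr_deriv ?_
    simp; ring
  hxd t _ := by
    have h := ((((hasDerivAt_id t).const_mul (2 * Real.pi)).sin).const_mul
      (-(2 * Real.pi))).hasDerivWithinAt (s := Set.Icc 0 1)
    refine h.congr_deriv ?_
    simp; ring
  hyd t _ := by
    have h := ((((hasDerivAt_id t).const_mul (2 * Real.pi)).cos).const_mul
      (2 * Real.pi)).hasDerivWithinAt (s := Set.Icc 0 1)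
    refine h.congr_deriv ?_
    simp; ring
  regular t _ := by
    have h : (-(2 * Real.pi) * Real.sin (2 * Real.pi * t)) ^ 2 +
        (2 * Real.pi * Real.cos (2 * Real.pi * t)) ^ 2 = (2 * Real.pi) ^ 2 := by
      linear_combination (2 * Real.pi) ^ 2 * Real.sin_sq_add_cos_sq (2 * Real.pi * t)
    rw [h]
    positivity
  intE := by
    have h : ∀ t : ℝ, (-(2 * Real.pi) * Real.sin (2 * Real.pi * t)) ^ 2 +
        (2 * Real.pi * Real.cos (2 * Real.pi * t)) ^ 2 = (2 * Real.pi) ^ 2 := fun t => by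
      linear_combination (2 * Real.pi) ^ 2 * Real.sin_sq_add_cos_sq (2 * Real.pi * t)
    simp only [h]
    apply Continuous.intervalIntegrable
    fun_prop
  intK := by
    have h : ∀ t : ℝ, (-(2 * Real.pi) * Real.sin (2 * Real.pi * t)) ^ 2 +
        (2 * Real.pi * Real.cos (2 * Real.pi * t)) ^ 2 = (2 * Real.pi) ^ 2 := fun t => by
      linear_combination (2 * Real.pi) ^ 2 * Real.sin_sq_add_cos_sq (2 * Real.pi * t)
    simp only [h]
    apply Continuous.intervalIntegrable
    fun_prop

lemma unitCircle_speed (t : ℝ) :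
    unitCircle.xd t ^ 2 + unitCircle.yd t ^ 2 = (2 * Real.pi) ^ 2 := by
  simp only [unitCircle]
  linear_combination (2 * Real.pi) ^ 2 * Real.sin_sq_add_cos_sq (2 * Real.pi * t)

lemma unitCircle_cross (t : ℝ) :
    unitCircle.xd t * unitCircle.ydd t - unitCircle.xdd t * unitCircle.yd t
      = (2 * Real.pi) ^ 3 := by
  simp only [unitCircle]
  linear_combination (2 * Real.pi) ^ 3 * Real.sin_sq_add_cos_sq (2 * Real.pi * t)

lemma unitCircle_closed : unitCircle.IsClosedCurve := by
  unfold IsClosedCurve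
  simp only [unitCircle_speed]
  simp [unitCircle]

lemma unitCircle_energy : unitCircle.elasticEnergy + unitCircle.length = 4 * Real.pi := by
  unfold elasticEnergy length
  simp only [unitCircle_speed, unitCircle_cross, Real.sqrt_sq Real.two_pi_pos.le]
  rw [intervalIntegral.integral_const, intervalIntegral.integral_const]
  have := Real.pi_pos.ne'
  simp only [smul_eq_mul]
  field_simp
  norm_num

end RegularCurve

/-- For every closed regular curve of class `H^2` in the plane, the
penalized elastic energy satisfies `F = E + L ≥ 4π`, with equality attained by
the circle of radius `1`. -/
theorem penalized_energy_ge_four_pi :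
    (∀ γ : RegularCurve, γ.IsClosedCurve →
      4 * Real.pi ≤ γ.elasticEnergy + γ.length) ∧
    ∃ γ : RegularCurve, γ.IsClosedCurve ∧
      (∀ t, γ.x t = Real.cos (2 * Real.pi * t)) ∧
      (∀ t, γ.y t = Real.sin (2 * Real.pi * t)) ∧
      γ.elasticEnergy + γ.length = 4 * Real.pi := by

  refine ⟨fun γ hγ => ?_, RegularCurve.unitCircle, RegularCurve.unitCircle_closed,
    fun t => rfl, fun t => rfl, RegularCurve.unitCircle_energy⟩
  have h1 := γ.two_pi_le_totalAbsCurvature hγ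
  have h2 := γ.two_mul_totalAbsCurvature_le
  linarith
end

section
/- Fix δ>0. For every closed regular curve γ:[0,1]→ℝ² of class H², the penalized energy satisfies F_δ(γ) = E(γ) + δ L(γ) ≥ 4π√δ, and the circle of radius δ^{-1/2} attains this value; hence the infimum of F_δ over closed regular H² curves equals 4π√δ. -/
/-- Angle lift of the tangent. -/
theorem exists_angle (γ : RegularCurve) : ∃ θ : ℝ → ℝ, Continuous θ ∧
    (∀ t ∈ Set.Icc (0:ℝ) 1,
      γ.xd t = Real.sqrt (γ.xd t ^ 2 + γ.yd t ^ 2) * Real.cos (θ t) ∧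
      γ.yd t = Real.sqrt (γ.xd t ^ 2 + γ.yd t ^ 2) * Real.sin (θ t)) ∧
    (∀ t ∈ Set.Ioo (0:ℝ) 1, HasDerivAt θ
      ((γ.xd t * γ.ydd t - γ.xdd t * γ.yd t) / (γ.xd t ^ 2 + γ.yd t ^ 2)) t) := by
  set z : ℝ → ℂ := fun t => (γ.xd t : ℂ) + (γ.yd t : ℂ) * Complex.I with hz
  have hzre : ∀ t, (z t).re = γ.xd t := by intro t; simp [hz]
  have hzim : ∀ t, (z t).im = γ.yd t := by intro t; simp [hz]
  have hzne : ∀ t ∈ Set.Icc (0:ℝ) 1, z t ≠ 0 := by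
    intro t ht h
    apply γ.regular t ht
    rw [← hzre, ← hzim, h]; simp
  have hzder : ∀ t ∈ Set.Icc (0:ℝ) 1, HasDerivWithinAt z
      ((γ.xdd t : ℂ) + (γ.ydd t : ℂ) * Complex.I) (Set.Icc 0 1) t := by
    intro t ht
    exact (γ.hxd t ht).ofReal_comp.add ((γ.hyd t ht).ofReal_comp.mul_const _)
  have hzc : ContinuousOn z (Set.Icc 0 1) := fun t ht => (hzder t ht).continuousWithinAt
  have h01 : (0:ℝ) ≤ 1 := zero_le_one
  let f : C(ℝ, ℂ) := ⟨Set.IccExtend h01 ((Set.Icc (0:ℝ) 1).domRestrict z),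
    (continuousOn_iff_continuous_domRestrict.mp hzc).Icc_extend'⟩
  have hf : ∀ t ∈ Set.Icc (0:ℝ) 1, f t = z t := by
    intro t ht
    exact Set.IccExtend_of_mem h01 ((Set.Icc (0:ℝ) 1).domRestrict z) ht
  have hfne : ∀ t, f t ∈ ({0}ᶜ : Set ℂ) := by
    intro t
    simp only [f, ContinuousMap.coe_mk, Set.IccExtend, Function.comp_apply, Set.domRestrict_apply]
    exact hzne _ (Set.projIcc 0 1 h01 t).2
  obtain ⟨w, ⟨_, hw⟩, _⟩ := Complex.isCoveringMapOn_exp.existsUnique_continuousMap_lifts f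
    (a₀ := (0:ℝ)) (e₀ := Complex.log (f 0)) (Complex.exp_log (hfne 0)) hfne
  have hw' : ∀ t, Complex.exp (w t) = f t := fun t => congrFun hw t
  refine ⟨fun t => (w t).im, by fun_prop, ?_, ?_⟩
  · intro t ht
    have h1 : Complex.exp (w t) = z t := by rw [hw', hf t ht]
    have h2 : Real.sqrt (γ.xd t ^ 2 + γ.yd t ^ 2) = Real.exp (w t).re := by
      rw [← Complex.norm_exp, h1, Complex.norm_eq_sqrt_sq_add_sq, hzre, hzim]
    rw [h2, ← Complex.exp_re, ← Complex.exp_im, h1, hzre, hzim]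
    exact ⟨rfl, rfl⟩
  · intro t ht
    have htI := Set.Ioo_subset_Icc_self ht
    have hzd : HasDerivAt z ((γ.xdd t : ℂ) + (γ.ydd t : ℂ) * Complex.I) t :=
      (hzder t htI).hasDerivAt (Icc_mem_nhds ht.1 ht.2)
    have hne := hzne t htI
    have hlog : HasDerivAt (fun s => Complex.log (z s / z t))
        (((γ.xdd t : ℂ) + (γ.ydd t : ℂ) * Complex.I) / z t) t := by
      have := (hzd.div_const (z t)).clog_real (by simp [div_self hne])
      simpa [div_self hne] using this
    have hev : ∀ᶠ s in nhds t, w s = w t + Complex.log (z s / z t) := by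
      have hc : ContinuousAt (fun s => (w s - w t).im) t := by fun_prop
      have hm : ∀ᶠ s in nhds t, (w s - w t).im ∈ Set.Ioo (-Real.pi) Real.pi := by
        apply hc
        apply Ioo_mem_nhds <;> simp [Real.pi_pos]
      filter_upwards [hm, Icc_mem_nhds ht.1 ht.2] with s hs hsI
      have : z s / z t = Complex.exp (w s - w t) := by
        rw [Complex.exp_sub, hw', hw', hf s hsI, hf t htI]
      rw [this, Complex.log_exp hs.1 hs.2.le]; ring
    have hwd : HasDerivAt w (((γ.xdd t : ℂ) + (γ.ydd t : ℂ) * Complex.I) / z t) t :=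
      (hlog.const_add (w t)).congr_of_eventuallyEq hev
    have him := (Complex.imCLM.hasFDerivAt.comp_hasDerivAt t hwd)
    have e : (γ.xd t * γ.ydd t - γ.xdd t * γ.yd t) / (γ.xd t ^ 2 + γ.yd t ^ 2)
        = (((γ.xdd t : ℂ) + (γ.ydd t : ℂ) * Complex.I) / z t).im := by
      rw [Complex.div_im, Complex.normSq_apply, hzre, hzim]
      simp
      ring
    rw [e]
    exact him

theorem fenchel (γ : RegularCurve) (hγ : γ.IsClosedCurve) :
    2 * Real.pi ≤ γ.totalAbsCurvature := by
  obtain ⟨θ, hθc, hθ, hθd⟩ := exists_angle γ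
  obtain ⟨hx01, hy01, hτx, hτy⟩ := hγ
  set K : ℝ → ℝ := fun t => |γ.xd t * γ.ydd t - γ.xdd t * γ.yd t| / (γ.xd t ^ 2 + γ.yd t ^ 2)
    with hK
  have hKint : IntervalIntegrable K MeasureTheory.volume 0 1 := γ.intK
  have hpos : ∀ t ∈ Set.Icc (0:ℝ) 1, 0 < Real.sqrt (γ.xd t ^ 2 + γ.yd t ^ 2) := by
    intro t ht
    exact Real.sqrt_pos.mpr (lt_of_le_of_ne (by positivity) (γ.regular t ht).symm)
  have hKon : ∀ a b, 0 ≤ a → a ≤ b → b ≤ 1 →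
      MeasureTheory.IntegrableOn K (Set.Icc a b) := by
    intro a b ha hab hb
    have := (intervalIntegrable_iff_integrableOn_Icc_of_le zero_le_one).mp hKint
    exact this.mono_set (Set.Icc_subset_Icc ha hb)
  have hKii : ∀ a b, 0 ≤ a → a ≤ b → b ≤ 1 →
      IntervalIntegrable K MeasureTheory.volume a b := fun a b ha hab hb =>
    (intervalIntegrable_iff_integrableOn_Icc_of_le hab).mpr (hKon a b ha hab hb)
  have key : ∀ a b, 0 ≤ a → a ≤ b → b ≤ 1 → |θ b - θ a| ≤ ∫ t in a..b, K t := by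
    intro a b ha hab hb
    have hmem : ∀ t ∈ Set.Ioo a b, t ∈ Set.Ioo (0:ℝ) 1 := fun t ht =>
      ⟨ha.trans_lt ht.1, ht.2.trans_le hb⟩
    have habs : ∀ t, |(γ.xd t * γ.ydd t - γ.xdd t * γ.yd t) / (γ.xd t ^ 2 + γ.yd t ^ 2)|
        = K t := by
      intro t
      rw [abs_div, abs_of_nonneg (by positivity : 0 ≤ γ.xd t ^ 2 + γ.yd t ^ 2)]
    rw [abs_le]
    constructor
    · have := intervalIntegral.sub_le_integral_of_hasDeriv_right_of_le (g := fun t => - θ t)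
        (φ := K) hab
        hθc.neg.continuousOn (fun t ht => (hθd t (hmem t ht)).neg.hasDerivWithinAt)
        (hKon a b ha hab hb) (fun t _ => by rw [← habs]; exact neg_le_abs _)
      linarith
    · exact intervalIntegral.sub_le_integral_of_hasDeriv_right_of_le (φ := K) hab
        hθc.continuousOn (fun t ht => (hθd t (hmem t ht)).hasDerivWithinAt)
        (hKon a b ha hab hb) (fun t _ => by rw [← habs]; exact le_abs_self _)
  change 2 * Real.pi ≤ ∫ t in (0:ℝ)..1, K t
  have m0 : (0:ℝ) ∈ Set.Icc (0:ℝ) 1 := by simp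
  have m1 : (1:ℝ) ∈ Set.Icc (0:ℝ) 1 := by simp
  have hcs : ∀ t ∈ Set.Icc (0:ℝ) 1,
      γ.xd t / Real.sqrt (γ.xd t ^ 2 + γ.yd t ^ 2) = Real.cos (θ t) ∧
      γ.yd t / Real.sqrt (γ.xd t ^ 2 + γ.yd t ^ 2) = Real.sin (θ t) := by
    intro t ht
    rw [div_eq_iff (hpos t ht).ne', div_eq_iff (hpos t ht).ne', mul_comm, mul_comm (Real.sin _)]
    exact hθ t ht
  rw [(hcs 0 m0).1, (hcs 1 m1).1] at hτx
  rw [(hcs 0 m0).2, (hcs 1 m1).2] at hτy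
  have hone : Real.cos (θ 1 - θ 0) = 1 := by
    rw [Real.cos_sub, hτx, hτy]
    nlinarith [Real.sin_sq_add_cos_sq (θ 1)]
  obtain ⟨n, hn⟩ := (Real.cos_eq_one_iff _).mp hone
  have hpi := Real.pi_pos
  by_cases hn0 : n = 0
  · have hclosed : θ 1 = θ 0 := by subst hn0; simp at hn; linarith
    obtain ⟨p, hp, hpmin⟩ := isCompact_Icc.exists_isMinOn ⟨0, m0⟩ (hθc.continuousOn (s := Set.Icc (0:ℝ) 1))
    obtain ⟨q, hq, hqmax⟩ := isCompact_Icc.exists_isMaxOn ⟨0, m0⟩ (hθc.continuousOn (s := Set.Icc (0:ℝ) 1))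
    have hwide : Real.pi ≤ θ q - θ p := by
      by_contra! hlt
      set c := (θ q + θ p) / 2 with hc
      have hmono : StrictMonoOn (fun t => γ.x t * Real.cos c + γ.y t * Real.sin c)
          (Set.Icc 0 1) := by
        apply strictMonoOn_of_deriv_pos (convex_Icc 0 1)
        · intro t ht
          exact (((γ.hx t ht).mul_const _).add ((γ.hy t ht).mul_const _)).continuousWithinAt
        · intro t ht
          rw [interior_Icc] at ht
          have htI := Set.Ioo_subset_Icc_self ht
          have hnb := Icc_mem_nhds ht.1 ht.2
          have hd := (((γ.hx t htI).hasDerivAt hnb).mul_const (Real.cos c)).add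
            (((γ.hy t htI).hasDerivAt hnb).mul_const (Real.sin c))
          have hd' : deriv (fun t => γ.x t * Real.cos c + γ.y t * Real.sin c) t
            = γ.xd t * Real.cos c + γ.yd t * Real.sin c := hd.deriv
          have e : γ.xd t * Real.cos c + γ.yd t * Real.sin c
              = Real.sqrt (γ.xd t ^ 2 + γ.yd t ^ 2) * Real.cos (θ t - c) := by
            rw [Real.cos_sub, ← (hcs t htI).1, ← (hcs t htI).2]
            have := (hpos t htI).ne'
            field_simp
          rw [hd', e]
          have h1 : θ p ≤ θ t := hpmin htI
          have h2 : θ t ≤ θ q := hqmax htI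
          exact mul_pos (hpos t htI) (Real.cos_pos_of_mem_Ioo ⟨by linarith, by linarith⟩)
      have := hmono m0 m1 one_pos
      simp only [hx01, hy01, lt_irrefl] at this
    have split : ∀ a b, 0 ≤ a → a ≤ b → b ≤ 1 → 2 * |θ b - θ a| ≤ ∫ t in (0:ℝ)..1, K t := by
      intro a b ha hab hb
      have k1 := key 0 a le_rfl ha (hab.trans hb)
      have k2 := key a b ha hab hb
      have k3 := key b 1 (ha.trans hab) hb le_rfl
      have e1 := intervalIntegral.integral_add_adjacent_intervals
        (hKii 0 a le_rfl ha (hab.trans hb)) (hKii a b ha hab hb)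
      have e2 := intervalIntegral.integral_add_adjacent_intervals
        (hKii 0 b le_rfl (ha.trans hab) hb) (hKii b 1 (ha.trans hab) hb le_rfl)
      have : |θ b - θ a| ≤ |θ a - θ 0| + |θ 1 - θ b| := by
        rw [hclosed]
        have := abs_sub_le (θ b) (θ 0) (θ a)
        rw [abs_sub_comm (θ a), abs_sub_comm (θ 0)] at *
        linarith [abs_sub_comm (θ b) (θ 0), abs_sub_comm (θ a) (θ 0)]
      linarith
    rcases le_total p q with h | h
    · have := split p q hp.1 h hq.2
      linarith [le_abs_self (θ q - θ p)]
    · have := split q p hq.1 h hp.2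
      linarith [neg_le_abs (θ p - θ q)]
  · have h := key 0 1 le_rfl zero_le_one le_rfl
    rw [← hn, abs_mul, abs_of_pos (by positivity : 0 < 2 * Real.pi)] at h
    have h1 : (1:ℝ) ≤ |(n:ℝ)| := by
      exact_mod_cast Int.one_le_abs hn0
    nlinarith

theorem lower_bound (δ : ℝ) (hδ : 0 < δ) (γ : RegularCurve) (hγ : γ.IsClosedCurve) :
    4 * Real.pi * Real.sqrt δ ≤ γ.elasticEnergy + δ * γ.length := by
  have hF := fenchel γ hγ
  have hLint : IntervalIntegrable (fun t => Real.sqrt (γ.xd t ^ 2 + γ.yd t ^ 2))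
      MeasureTheory.volume 0 1 := by
    apply ContinuousOn.intervalIntegrable
    rw [Set.uIcc_of_le zero_le_one]
    have h1 : ContinuousOn γ.xd (Set.Icc 0 1) := fun t ht => (γ.hxd t ht).continuousWithinAt
    have h2 : ContinuousOn γ.yd (Set.Icc 0 1) := fun t ht => (γ.hyd t ht).continuousWithinAt
    exact ((h1.pow 2).add (h2.pow 2)).sqrt
  have hle : 2 * Real.sqrt δ * γ.totalAbsCurvature ≤ γ.elasticEnergy + δ * γ.length := by
    unfold RegularCurve.totalAbsCurvature RegularCurve.elasticEnergy RegularCurve.length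
    rw [← intervalIntegral.integral_const_mul, ← intervalIntegral.integral_const_mul,
      ← intervalIntegral.integral_add γ.intE (hLint.const_mul δ)]
    apply intervalIntegral.integral_mono_on zero_le_one (γ.intK.const_mul _)
      (γ.intE.add (hLint.const_mul δ))
    intro t ht
    have hp : 0 < γ.xd t ^ 2 + γ.yd t ^ 2 :=
      lt_of_le_of_ne (by positivity) (γ.regular t ht).symm
    generalize γ.xd t * γ.ydd t - γ.xdd t * γ.yd t = c
    generalize γ.xd t ^ 2 + γ.yd t ^ 2 = v at hp ⊢
    obtain ⟨s, hs, rfl⟩ : ∃ s, 0 < s ∧ v = s ^ 2 :=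
      ⟨Real.sqrt v, Real.sqrt_pos.mpr hp, (Real.sq_sqrt hp.le).symm⟩
    obtain ⟨d, hd, rfl⟩ : ∃ s, 0 < s ∧ δ = s ^ 2 :=
      ⟨Real.sqrt δ, Real.sqrt_pos.mpr hδ, (Real.sq_sqrt hδ.le).symm⟩
    rw [Real.sqrt_sq hs.le, Real.sqrt_sq hd.le, ← sq_abs c]
    have : 0 ≤ (|c| / s ^ 2 - d * s) ^ 2 / s := by positivity
    have e : (|c| / s ^ 2 - d * s) ^ 2 / s =
      |c| ^ 2 / ((s ^ 2) ^ 2 * s) + d ^ 2 * s - 2 * d * (|c| / s ^ 2) := by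
      field_simp
      ring
    linarith
  have := mul_le_mul_of_nonneg_left hF (by positivity : 0 ≤ 2 * Real.sqrt δ)
  linarith

theorem circle_attains (δ : ℝ) (hδ : 0 < δ) : ∃ γ : RegularCurve, γ.IsClosedCurve ∧
      (∀ t, γ.x t = (Real.sqrt δ)⁻¹ * Real.cos (2 * Real.pi * t)) ∧
      (∀ t, γ.y t = (Real.sqrt δ)⁻¹ * Real.sin (2 * Real.pi * t)) ∧
      γ.elasticEnergy + δ * γ.length = 4 * Real.pi * Real.sqrt δ := by
  obtain ⟨d, hd, rfl⟩ : ∃ s, 0 < s ∧ δ = s ^ 2 :=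
    ⟨Real.sqrt δ, Real.sqrt_pos.mpr hδ, (Real.sq_sqrt hδ.le).symm⟩
  rw [Real.sqrt_sq hd.le]
  obtain ⟨a, ha, haπ⟩ : ∃ a, 0 < a ∧ a = 2 * Real.pi := ⟨_, by positivity, rfl⟩
  rw [← haπ]
  have hlin : ∀ t : ℝ, HasDerivAt (fun t => a * t) a t := fun t => by
    simpa using (hasDerivAt_id t).const_mul a
  have hcos : ∀ t : ℝ, HasDerivAt (fun t => Real.cos (a * t)) (-Real.sin (a * t) * a) t :=
    fun t => (hlin t).cos
  have hsin : ∀ t : ℝ, HasDerivAt (fun t => Real.sin (a * t)) (Real.cos (a * t) * a) t :=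
    fun t => (hlin t).sin
  have hv : ∀ t : ℝ, (d⁻¹ * (-Real.sin (a * t) * a)) ^ 2 + (d⁻¹ * (Real.cos (a * t) * a)) ^ 2
      = (a / d) ^ 2 := by
    intro t
    have := Real.sin_sq_add_cos_sq (a * t)
    have e : (d⁻¹ * (-Real.sin (a * t) * a)) ^ 2 + (d⁻¹ * (Real.cos (a * t) * a)) ^ 2
      = (a / d) ^ 2 * (Real.sin (a * t) ^ 2 + Real.cos (a * t) ^ 2) := by ring
    rw [e, this, mul_one]
  have hc : ∀ t : ℝ, (d⁻¹ * (-Real.sin (a * t) * a)) * (d⁻¹ * (-Real.sin (a * t) * a * a))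
      - (d⁻¹ * (-(Real.cos (a * t) * a) * a)) * (d⁻¹ * (Real.cos (a * t) * a))
      = a ^ 3 / d ^ 2 := by
    intro t
    have := Real.sin_sq_add_cos_sq (a * t)
    have e : (d⁻¹ * (-Real.sin (a * t) * a)) * (d⁻¹ * (-Real.sin (a * t) * a * a))
      - (d⁻¹ * (-(Real.cos (a * t) * a) * a)) * (d⁻¹ * (Real.cos (a * t) * a))
      = (a ^ 3 / d ^ 2) * (Real.sin (a * t) ^ 2 + Real.cos (a * t) ^ 2) := by ring
    rw [e, this, mul_one]
  have had : 0 < a / d := by positivity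
  let γ : RegularCurve :=
    { x := fun t => d⁻¹ * Real.cos (a * t)
      y := fun t => d⁻¹ * Real.sin (a * t)
      xd := fun t => d⁻¹ * (-Real.sin (a * t) * a)
      yd := fun t => d⁻¹ * (Real.cos (a * t) * a)
      xdd := fun t => d⁻¹ * (-(Real.cos (a * t) * a) * a)
      ydd := fun t => d⁻¹ * (-Real.sin (a * t) * a * a)
      hx := fun t _ => ((hcos t).const_mul _).hasDerivWithinAt
      hy := fun t _ => ((hsin t).const_mul _).hasDerivWithinAt
      hxd := fun t _ => (((hsin t).neg.mul_const a).const_mul _).hasDerivWithinAt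
      hyd := fun t _ => (((hcos t).mul_const a).const_mul _).hasDerivWithinAt
      regular := fun t _ => by rw [hv]; positivity
      intE := by simp only [hv, hc]; exact intervalIntegrable_const
      intK := by simp only [hv, hc]; exact intervalIntegrable_const }
  refine ⟨γ, ?_, fun t => rfl, fun t => rfl, ?_⟩
  · refine ⟨?_, ?_, ?_, ?_⟩ <;> simp [γ, haπ]
  · simp only [RegularCurve.elasticEnergy, RegularCurve.length, γ, hv, hc, Real.sqrt_sq had.le,
      intervalIntegral.integral_const]
    rw [show 4 * Real.pi = 2 * a by rw [haπ]; ring]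
    simp only [sub_zero, one_smul]
    field_simp
    ring

/-- Fix `δ > 0`. Every closed regular `H^2` curve satisfies
`F_δ = E + δ L ≥ 4π√δ`, the circle of radius `δ^(-1/2)` attains this value,
and hence the infimum of `F_δ` over closed regular `H^2` curves equals `4π√δ`. -/
theorem penalized_energy_delta (δ : ℝ) (hδ : 0 < δ) :
    (∀ γ : RegularCurve, γ.IsClosedCurve →
      4 * Real.pi * Real.sqrt δ ≤ γ.elasticEnergy + δ * γ.length) ∧
    (∃ γ : RegularCurve, γ.IsClosedCurve ∧
      (∀ t, γ.x t = (Real.sqrt δ)⁻¹ * Real.cos (2 * Real.pi * t)) ∧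
      (∀ t, γ.y t = (Real.sqrt δ)⁻¹ * Real.sin (2 * Real.pi * t)) ∧
      γ.elasticEnergy + δ * γ.length = 4 * Real.pi * Real.sqrt δ) ∧
    IsGLB {v : ℝ | ∃ γ : RegularCurve, γ.IsClosedCurve ∧
        v = γ.elasticEnergy + δ * γ.length}
      (4 * Real.pi * Real.sqrt δ) := by
  refine ⟨lower_bound δ hδ, circle_attains δ hδ, ?_, ?_⟩
  · rintro v ⟨γ, hγ, rfl⟩
    exact lower_bound δ hδ γ hγ
  · intro b hb
    obtain ⟨γ, hγ, _, _, h⟩ := circle_attains δ hδ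
    rw [← h]
    exact hb ⟨γ, hγ, rfl⟩
end

section
/- Let δ>0 and let γ=(x,y):I→ℝ² be a smooth curve parametrized by arclength whose scalar curvature k satisfies the elastica equation 2k'' + k³ - δk = 0 on the interval I. Assume that the conserved quantity (k')² + (k²/2 - δ/2)² (which is constant on I) is strictly positive, and set λ>0 with λ² = (k')² + (k²/2 - δ/2)². Then there is an isometry Φ of ℝ² such that the components (x̃,ỹ) of Φ∘γ satisfy the dynamical system x̃'' = λ ỹ ỹ' and ỹ'' = -λ ỹ x̃' on I; indeed one may take ỹ = -k/λ and x̃' = (k²/2 - δ/2)/λ. -/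
theorem const_aux {I : Set ℝ} (hI : IsOpen I) (hconn : IsPreconnected I) (f : ℝ → ℝ)
    (hf : ∀ t ∈ I, HasDerivAt f 0 t) {a b : ℝ} (ha : a ∈ I) (hb : b ∈ I) : f a = f b :=
  hI.is_const_of_deriv_eq_zero hconn
    (fun t ht => (hf t ht).differentiableAt.differentiableWithinAt)
    (fun t ht => (hf t ht).deriv) ha hb

theorem angle_aux (c s : ℝ) (h : c ^ 2 + s ^ 2 = 1) :
    ∃ θ : ℝ, Real.cos θ = c ∧ Real.sin θ = s := by
  have hn : ‖(⟨c, s⟩ : ℂ)‖ = 1 := by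
    rw [Complex.norm_def, Complex.normSq_mk, Real.sqrt_eq_one]
    linarith
  have hz : (⟨c, s⟩ : ℂ) ≠ 0 := by
    intro h0
    rw [h0] at hn
    simp at hn
  refine ⟨Complex.arg ⟨c, s⟩, ?_, ?_⟩
  · rw [Complex.cos_arg hz, hn]; simp
  · rw [Complex.sin_arg, hn]; simp

/-- Let `δ > 0` and let `γ = (x, y)` be a smooth unit-speed curve
on an (open, connected) interval `I` whose curvature `k = x'y'' - x''y'` satisfies
the elastica equation `2k'' + k³ - δk = 0`, and suppose the conserved quantity
`(k')² + (k²/2 - δ/2)²` equals `λ²` on `I` with `λ > 0`. Then there is an isometry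
of `ℝ²` (a rotation/reflection `(x, y) ↦ (cos θ · x - sin θ · εy,
sin θ · x + cos θ · εy)`, `ε = ±1`, followed by a translation) such that the
components `(x̃, ỹ)` of the transformed curve satisfy `x̃'' = λ ỹ ỹ'` and
`ỹ'' = -λ ỹ x̃'`; indeed one may take `ỹ = -k/λ` and `x̃' = (k²/2 - δ/2)/λ`. -/
theorem elastica_to_dynamical_system (δ lam : ℝ) (hδ : 0 < δ) (hlam : 0 < lam)
    (I : Set ℝ) (hI : IsOpen I) (hconn : IsPreconnected I)
    (x y x1 y1 x2 y2 k k1 k2 : ℝ → ℝ)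
    (hx : ∀ t ∈ I, HasDerivAt x (x1 t) t)
    (hy : ∀ t ∈ I, HasDerivAt y (y1 t) t)
    (hx1 : ∀ t ∈ I, HasDerivAt x1 (x2 t) t)
    (hy1 : ∀ t ∈ I, HasDerivAt y1 (y2 t) t)
    (hunit : ∀ t ∈ I, x1 t ^ 2 + y1 t ^ 2 = 1)
    (hk : ∀ t ∈ I, k t = x1 t * y2 t - x2 t * y1 t)
    (hk1 : ∀ t ∈ I, HasDerivAt k (k1 t) t)
    (hk2 : ∀ t ∈ I, HasDerivAt k1 (k2 t) t)
    (hode : ∀ t ∈ I, 2 * k2 t + k t ^ 3 - δ * k t = 0)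
    (hconst : ∀ t ∈ I, k1 t ^ 2 + (k t ^ 2 / 2 - δ / 2) ^ 2 = lam ^ 2) :
    ∃ θ cx cy ε : ℝ, (ε = 1 ∨ ε = -1) ∧
      (∀ t ∈ I,
        Real.sin θ * x t + Real.cos θ * (ε * y t) + cy = -(k t) / lam) ∧
      (∀ t ∈ I,
        Real.cos θ * x1 t - Real.sin θ * (ε * y1 t) =
          (k t ^ 2 / 2 - δ / 2) / lam) ∧
      (∀ t ∈ I,
        Real.cos θ * x2 t - Real.sin θ * (ε * y2 t) =
          lam * (Real.sin θ * x t + Real.cos θ * (ε * y t) + cy) *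
            (Real.sin θ * x1 t + Real.cos θ * (ε * y1 t))) ∧
      (∀ t ∈ I,
        Real.sin θ * x2 t + Real.cos θ * (ε * y2 t) =
          -(lam * (Real.sin θ * x t + Real.cos θ * (ε * y t) + cy) *
            (Real.cos θ * x1 t - Real.sin θ * (ε * y1 t)))) := by
  rcases I.eq_empty_or_nonempty with rfl | ⟨a, ha⟩
  · exact ⟨0, 0, 0, 1, Or.inl rfl, by simp, by simp, by simp, by simp⟩
  have hl : lam ≠ 0 := hlam.ne'
  have horth : ∀ t ∈ I, x1 t * x2 t + y1 t * y2 t = 0 := by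
    intro t ht
    have h1 := ((hx1 t ht).pow 2).add ((hy1 t ht).pow 2)
    have h2 : HasDerivAt (x1 ^ 2 + y1 ^ 2) 0 t := by
      refine (hasDerivAt_const t (1 : ℝ)).congr_of_eventuallyEq ?_
      filter_upwards [hI.mem_nhds ht] with r hr
      simpa using hunit r hr
    have h3 := h1.unique h2
    norm_num at h3
    linarith
  have hX2 : ∀ t ∈ I, x2 t = -(k t * y1 t) := by
    intro t ht
    linear_combination (-x2 t) * hunit t ht + x1 t * horth t ht + y1 t * hk t ht
  have hY2 : ∀ t ∈ I, y2 t = k t * x1 t := by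
    intro t ht
    linear_combination (-y2 t) * hunit t ht + y1 t * horth t ht - x1 t * hk t ht
  -- the target tangent `(u, v)`
  obtain ⟨u, hu⟩ : ∃ u : ℝ → ℝ, u = fun t => (k t ^ 2 / 2 - δ / 2) / lam := ⟨_, rfl⟩
  obtain ⟨v, hv⟩ : ∃ v : ℝ → ℝ, v = fun t => -(k1 t) / lam := ⟨_, rfl⟩
  have hu' : ∀ t ∈ I, HasDerivAt u (-(k t * v t)) t := by
    intro t ht
    have h := ((((hk1 t ht).fun_pow 2).div_const 2).sub_const (δ / 2)).div_const lam
    rw [hu]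
    refine h.congr_deriv ?_
    rw [hv]
    field_simp
    norm_num
    ring
  have hv' : ∀ t ∈ I, HasDerivAt v (k t * u t) t := by
    intro t ht
    have h := ((hk2 t ht).fun_neg).div_const lam
    rw [hv]
    refine h.congr_deriv ?_
    rw [hu]
    field_simp
    linear_combination (-1 : ℝ) * hode t ht
  have huv : ∀ t ∈ I, u t ^ 2 + v t ^ 2 = 1 := by
    intro t ht
    have h := hconst t ht
    simp only [hu, hv]
    field_simp
    linear_combination 4 * h
  have hc : ∀ t ∈ I, u t * x1 t + v t * y1 t = u a * x1 a + v a * y1 a := by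
    intro t ht
    refine const_aux hI hconn (fun t => u t * x1 t + v t * y1 t) (fun r hr => ?_) ht ha
    refine (((hu' r hr).fun_mul (hx1 r hr)).fun_add
      ((hv' r hr).fun_mul (hy1 r hr))).congr_deriv ?_
    rw [hX2 r hr, hY2 r hr]; ring
  have hs : ∀ t ∈ I, v t * x1 t - u t * y1 t = v a * x1 a - u a * y1 a := by
    intro t ht
    refine const_aux hI hconn (fun t => v t * x1 t - u t * y1 t) (fun r hr => ?_) ht ha
    refine (((hv' r hr).fun_mul (hx1 r hr)).fun_sub
      ((hu' r hr).fun_mul (hy1 r hr))).congr_deriv ?_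
    rw [hX2 r hr, hY2 r hr]; ring
  obtain ⟨θ, hθc, hθs⟩ := angle_aux (u a * x1 a + v a * y1 a) (v a * x1 a - u a * y1 a) (by
    linear_combination (x1 a ^ 2 + y1 a ^ 2) * huv a ha + hunit a ha)
  have hU : ∀ t ∈ I, Real.cos θ * x1 t - Real.sin θ * y1 t = u t := by
    intro t ht
    rw [hθc, hθs, ← hc t ht, ← hs t ht]
    linear_combination u t * hunit t ht
  have hV : ∀ t ∈ I, Real.sin θ * x1 t + Real.cos θ * y1 t = v t := by
    intro t ht
    rw [hθc, hθs, ← hc t ht, ← hs t ht]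
    linear_combination v t * hunit t ht
  have hY : ∀ t ∈ I, Real.sin θ * x t + Real.cos θ * y t + k t / lam =
      Real.sin θ * x a + Real.cos θ * y a + k a / lam := by
    intro t ht
    refine const_aux hI hconn (fun t => Real.sin θ * x t + Real.cos θ * y t + k t / lam)
      (fun r hr => ?_) ht ha
    refine ((((hx r hr).const_mul (Real.sin θ)).fun_add
      ((hy r hr).const_mul (Real.cos θ))).fun_add ((hk1 r hr).div_const lam)).congr_deriv ?_
    rw [hV r hr, hv]; ring
  have hY' : ∀ t ∈ I, Real.sin θ * x t + Real.cos θ * y t +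
      -(Real.sin θ * x a + Real.cos θ * y a + k a / lam) = -(k t) / lam := by
    intro t ht
    rw [← hY t ht]; ring
  refine ⟨θ, 0, -(Real.sin θ * x a + Real.cos θ * y a + k a / lam), 1, Or.inl rfl, ?_, ?_, ?_, ?_⟩
  · intro t ht
    rw [one_mul, hY' t ht]
  · intro t ht
    rw [one_mul, hU t ht, hu]
  · intro t ht
    rw [one_mul, one_mul, one_mul, hY' t ht, hX2 t ht, hY2 t ht]
    field_simp
    ring
  · intro t ht
    rw [one_mul, one_mul, one_mul, hY' t ht, hX2 t ht, hY2 t ht]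
    field_simp
    ring
end

section
/- Let λ>0 and let γ=(x,y):I→ℝ² be a smooth curve parametrized by arclength whose components satisfy the system x'' = λyy' and y'' = -λyx' on the interval I. Then the signed curvature k = x'y'' - x''y' of γ equals -λy on I, there exists μ∈ℝ such that x' = (λ/2)y² + μ on I, and k satisfies the elastica equation 2k'' + k³ - δk = 0 on I with δ = -2λμ. -/
/-- Let `λ > 0` and let `γ = (x, y)` be a smooth unit-speed curve
on an (open, connected) interval `I` whose components satisfy `x'' = λyy'` and
`y'' = -λyx'`. Then the signed curvature `k = x'y'' - x''y'` equals `-λy` on `I`,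
there is `μ ∈ ℝ` with `x' = (λ/2)y² + μ` on `I`, and `k` satisfies the elastica
equation `2k'' + k³ - δk = 0` on `I` with `δ = -2λμ`. -/
theorem dynamical_system_to_elastica (lam : ℝ) (hlam : 0 < lam)
    (I : Set ℝ) (hI : IsOpen I) (hconn : IsPreconnected I)
    (x y x1 y1 x2 y2 : ℝ → ℝ)
    (hx : ∀ t ∈ I, HasDerivAt x (x1 t) t)
    (hy : ∀ t ∈ I, HasDerivAt y (y1 t) t)
    (hx1 : ∀ t ∈ I, HasDerivAt x1 (x2 t) t)
    (hy1 : ∀ t ∈ I, HasDerivAt y1 (y2 t) t)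
    (hunit : ∀ t ∈ I, x1 t ^ 2 + y1 t ^ 2 = 1)
    (hsys1 : ∀ t ∈ I, x2 t = lam * y t * y1 t)
    (hsys2 : ∀ t ∈ I, y2 t = -(lam * y t * x1 t)) :
    (∀ t ∈ I, x1 t * y2 t - x2 t * y1 t = -(lam * y t)) ∧
    ∃ μ : ℝ,
      (∀ t ∈ I, x1 t = lam / 2 * y t ^ 2 + μ) ∧
      (∀ t ∈ I,
        HasDerivAt (fun s => x1 s * y2 s - x2 s * y1 s) (-(lam * y1 t)) t) ∧
      (∀ t ∈ I, HasDerivAt (fun s => -(lam * y1 s)) (-(lam * y2 t)) t) ∧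
      (∀ t ∈ I,
        2 * (-(lam * y2 t)) + (x1 t * y2 t - x2 t * y1 t) ^ 3 -
          (-(2 * lam * μ)) * (x1 t * y2 t - x2 t * y1 t) = 0) := by
  have hk : ∀ t ∈ I, x1 t * y2 t - x2 t * y1 t = -(lam * y t) := by
    intro t ht
    rw [hsys1 t ht, hsys2 t ht]
    linear_combination (-(lam * y t)) * hunit t ht
  have hd : ∀ t ∈ I, HasDerivAt (fun s => x1 s - lam / 2 * y s ^ 2) 0 t := by
    intro t ht
    have h := (hx1 t ht).sub (((hy t ht).pow 2).const_mul (lam / 2))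
    refine h.congr_deriv ?_
    rw [hsys1 t ht]
    simp
    ring
  obtain ⟨μ, hμ⟩ := hI.exists_is_const_of_deriv_eq_zero hconn
    (fun t ht => (hd t ht).differentiableAt.differentiableWithinAt)
    (fun t ht => (hd t ht).deriv)
  have hx1μ : ∀ t ∈ I, x1 t = lam / 2 * y t ^ 2 + μ := by
    intro t ht
    linear_combination hμ t ht
  refine ⟨hk, μ, hx1μ, ?_, ?_, ?_⟩
  · intro t ht
    refine (((hy t ht).const_mul lam).neg).congr_of_eventuallyEq ?_
    filter_upwards [hI.mem_nhds ht] with s hs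
    exact hk s hs
  · intro t ht
    exact ((hy1 t ht).const_mul lam).neg
  · intro t ht
    rw [hk t ht, hsys2 t ht, hx1μ t ht]
    ring
end

section
/- For all angles α₁, α₂ with 0 < α₁ ≤ α₂ ≤ 3π/4, one has 4 √(α₁ + α₂ sin α₂ / sin α₁) · √(α₁ + α₂ sin α₁ / sin α₂ + sin α₁) < 21.2075. -/
/-- `x / sin x` is increasing, in cross-multiplied form. -/
lemma aux_sin_ratio (a b : ℝ) (ha : 0 < a) (hab : a ≤ b) (hb : b ≤ Real.pi) :
    a * Real.sin b ≤ b * Real.sin a := by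
  have hb0 : 0 < b := lt_of_lt_of_le ha hab
  have h := strictConcaveOn_sin_Icc.concaveOn.2
    (show (0 : ℝ) ∈ Set.Icc 0 Real.pi from ⟨le_refl _, Real.pi_pos.le⟩)
    (show b ∈ Set.Icc 0 Real.pi from ⟨hb0.le, hb⟩)
    (show 0 ≤ 1 - a / b by rw [sub_nonneg, div_le_one hb0]; exact hab)
    (show 0 ≤ a / b by positivity) (by ring)
  simp only [smul_eq_mul, mul_zero, zero_add, Real.sin_zero] at h
  rw [div_mul_cancel₀ a hb0.ne', div_mul_eq_mul_div, div_le_iff₀ hb0] at h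
  linarith

/-- A crude bound for `x sin x` on `[0, 3π/4]`. -/
lemma aux_mul_sin (a : ℝ) (ha : 0 < a) (hb : a ≤ 3 * Real.pi / 4) :
    a * Real.sin a ≤ 21 / 32 * Real.pi := by
  have hp := Real.pi_pos
  obtain ⟨u, hu⟩ : ∃ u, a = Real.pi * (1 / 2 + u) :=
    ⟨a / Real.pi - 1 / 2, by field_simp; ring⟩
  have hu0 : -(1 / 2) < u := by
    by_contra hc
    nlinarith
  have hu1 : u ≤ 1 / 4 := by
    by_contra hc
    nlinarith
  have hs : Real.sin a ≤ 1 - 2 * u ^ 2 := by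
    have h := Real.cos_le_one_sub_mul_cos_sq (x := Real.pi * u)
      (by rw [abs_le]; constructor <;> nlinarith)
    have e : Real.sin a = Real.cos (Real.pi * u) := by
      rw [hu, show Real.pi * (1 / 2 + u) = Real.pi * u + Real.pi / 2 by ring,
        Real.sin_add_pi_div_two]
    rw [e]
    have e2 : 2 / Real.pi ^ 2 * (Real.pi * u) ^ 2 = 2 * u ^ 2 := by field_simp
    linarith
  have h1 : (1 / 2 + u) * (1 - 2 * u ^ 2) ≤ 21 / 32 := by
    have : 0 ≤ (1 / 4 - u) * (5 / 8 - 3 / 2 * u - 2 * u ^ 2) :=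
      mul_nonneg (by linarith) (by nlinarith)
    nlinarith
  calc a * Real.sin a ≤ a * (1 - 2 * u ^ 2) := by gcongr
    _ = Real.pi * ((1 / 2 + u) * (1 - 2 * u ^ 2)) := by rw [hu]; ring
    _ ≤ Real.pi * (21 / 32) := by gcongr
    _ = _ := by ring

/-- For all angles `0 < α₁ ≤ α₂ ≤ 3π/4`, the optimally rescaled
penalized elastic energy of the generalized double bubble satisfies
`4√(α₁ + α₂ sin α₂/sin α₁) · √(α₁ + α₂ sin α₁/sin α₂ + sin α₁) < 21.2075`. -/
theorem double_bubble_energy_lt_figure_eight (α₁ α₂ : ℝ)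
    (h₁ : 0 < α₁) (h₁₂ : α₁ ≤ α₂) (h₂ : α₂ ≤ 3 * Real.pi / 4) :
    4 * Real.sqrt (α₁ + α₂ * Real.sin α₂ / Real.sin α₁) *
        Real.sqrt (α₁ + α₂ * Real.sin α₁ / Real.sin α₂ + Real.sin α₁) <
      21.2075 := by
  have hp := Real.pi_pos
  have hp2 := Real.pi_lt_d4
  have h0 : 0 < α₂ := by linarith
  have hs : 0 < Real.sin α₁ := Real.sin_pos_of_pos_of_lt_pi h₁ (by linarith)
  have ht : 0 < Real.sin α₂ := Real.sin_pos_of_pos_of_lt_pi h0 (by linarith)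
  have r1 := aux_sin_ratio α₁ α₂ h₁ h₁₂ (by linarith)
  have r2 := aux_sin_ratio α₂ (3 * Real.pi / 4) h0 h₂ (by linarith)
  have m1 := aux_mul_sin α₁ h₁ (by linarith)
  have m2 := aux_mul_sin α₂ h0 h₂
  have e : Real.sin (3 * Real.pi / 4) = Real.sqrt 2 / 2 := by
    rw [show 3 * Real.pi / 4 = Real.pi - Real.pi / 4 by ring, Real.sin_pi_sub,
      Real.sin_pi_div_four]
  have hq : (1.414 : ℝ) ≤ Real.sqrt 2 := Real.le_sqrt_of_sq_le (by norm_num)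
  rw [e] at r2
  generalize Real.sin α₁ = s at *
  generalize Real.sin α₂ = t at *
  have hB : α₂ / t ≤ 3.333 := by
    rw [div_le_iff₀ ht]
    nlinarith
  have hA : α₁ * t / s ≤ α₂ := by
    rw [div_le_iff₀ hs]; exact r1
  have hP : (α₁ + α₂ * t / s) * (α₁ + α₂ * s / t + s) =
      α₁ ^ 2 + α₂ ^ 2 + α₂ * (α₁ * t / s) + (α₂ / t) * (α₁ * s) + α₁ * s + α₂ * t := by
    field_simp
    ring
  have c1 : α₂ * (α₁ * t / s) ≤ α₂ * α₂ := by gcongr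
  have c2 : (α₂ / t) * (α₁ * s) ≤ 3.333 * (21 / 32 * Real.pi) := by gcongr
  have c3 : α₂ * α₂ ≤ 2.3562 * 2.3562 := by gcongr <;> linarith
  have c4 : α₁ * α₁ ≤ 2.3562 * 2.3562 := by gcongr <;> linarith
  have hlt : (α₁ + α₂ * t / s) * (α₁ + α₂ * s / t + s) < (21.2075 / 4) ^ 2 := by
    rw [hP]
    norm_num at *
    linarith
  rw [mul_assoc, ← Real.sqrt_mul (by positivity)]
  have := (Real.sqrt_lt' (show (0 : ℝ) < 21.2075 / 4 by norm_num)).2 hlt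
  linarith
end

section
/- Let γ¹,γ²,γ³:[0,1]→ℝ² be regular curves of class H² forming a Theta-network: γ¹(0)=γ²(0)=γ³(0), γ¹(1)=γ²(1)=γ³(1), the two junction points are distinct, and at each of the two junctions the three unit tangent vectors sum to zero (so the curves meet at angles of 120 degrees). Then the penalized elastic energy satisfies F(Γ) = Σ_{i=1}^{3} ∫_{γ^i} ((k^i)² + 1) ds^i ≥ 4π. -/
open MeasureTheory Set

namespace ThetaAux

/-- The integrand of the total absolute curvature. -/
noncomputable def K (γ : RegularCurve) (t : ℝ) : ℝ :=
  |γ.xd t * γ.ydd t - γ.xdd t * γ.yd t| / (γ.xd t ^ 2 + γ.yd t ^ 2)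

/-- The cosine of the angle between the tangent and a unit vector `(e, f)`. -/
noncomputable def C (γ : RegularCurve) (e f t : ℝ) : ℝ :=
  (γ.xd t * e + γ.yd t * f) / Real.sqrt (γ.xd t ^ 2 + γ.yd t ^ 2)

lemma sq_pos (γ : RegularCurve) {t : ℝ} (ht : t ∈ Icc (0:ℝ) 1) :
    0 < γ.xd t ^ 2 + γ.yd t ^ 2 :=
  lt_of_le_of_ne (by positivity) (Ne.symm (γ.regular t ht))

lemma contxd (γ : RegularCurve) : ContinuousOn γ.xd (Icc 0 1) :=
  fun t ht => (γ.hxd t ht).continuousWithinAt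

lemma contyd (γ : RegularCurve) : ContinuousOn γ.yd (Icc 0 1) :=
  fun t ht => (γ.hyd t ht).continuousWithinAt

lemma cont_speed (γ : RegularCurve) :
    ContinuousOn (fun t => Real.sqrt (γ.xd t ^ 2 + γ.yd t ^ 2)) (Icc 0 1) :=
  (((contxd γ).pow 2).add ((contyd γ).pow 2)).sqrt

lemma contC (γ : RegularCurve) (e f : ℝ) : ContinuousOn (C γ e f) (Icc 0 1) := by
  unfold C
  refine ContinuousOn.div (((contxd γ).mul continuousOn_const).add
    ((contyd γ).mul continuousOn_const)) (cont_speed γ) ?_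
  intro t ht
  exact (Real.sqrt_pos.2 (sq_pos γ ht)).ne'

lemma K_nonneg (γ : RegularCurve) (t : ℝ) : 0 ≤ K γ t := by
  unfold K; positivity

lemma intK_sub (γ : RegularCurve) {u v : ℝ} (hu : u ∈ Icc (0:ℝ) 1) (hv : v ∈ Icc (0:ℝ) 1) :
    IntervalIntegrable (K γ) volume u v := by
  refine IntervalIntegrable.mono_set (show IntervalIntegrable (K γ) volume 0 1 from γ.intK) ?_
  rw [uIcc_of_le (zero_le_one)]
  exact uIcc_subset_Icc hu hv

lemma one_sub_C_sq (γ : RegularCurve) {e f t : ℝ} (hef : e ^ 2 + f ^ 2 = 1)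
    (ht : t ∈ Icc (0:ℝ) 1) :
    1 - C γ e f t ^ 2 =
      ((γ.xd t * f - γ.yd t * e) / Real.sqrt (γ.xd t ^ 2 + γ.yd t ^ 2)) ^ 2 := by
  have h := sq_pos γ ht
  unfold C
  rw [div_pow, div_pow, Real.sq_sqrt h.le]
  field_simp
  linear_combination (-(γ.xd t ^ 2 + γ.yd t ^ 2)) * hef

lemma C_abs (γ : RegularCurve) {e f t : ℝ} (hef : e ^ 2 + f ^ 2 = 1)
    (ht : t ∈ Icc (0:ℝ) 1) : -1 ≤ C γ e f t ∧ C γ e f t ≤ 1 := by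
  have h := one_sub_C_sq γ hef ht
  have h2 : C γ e f t ^ 2 ≤ 1 := by
    nlinarith [sq_nonneg ((γ.xd t * f - γ.yd t * e) / Real.sqrt (γ.xd t ^ 2 + γ.yd t ^ 2))]
  exact abs_le.1 ((sq_le_one_iff_abs_le_one _).1 h2)

lemma C_deriv (γ : RegularCurve) (e f : ℝ) {t : ℝ} (ht : t ∈ Ioo (0:ℝ) 1) :
    HasDerivAt (C γ e f)
      ((γ.xd t * γ.ydd t - γ.xdd t * γ.yd t) / (γ.xd t ^ 2 + γ.yd t ^ 2) *
      ((γ.xd t * f - γ.yd t * e) / Real.sqrt (γ.xd t ^ 2 + γ.yd t ^ 2))) t := by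
  have ht' := Ioo_subset_Icc_self ht
  have hn : Icc (0:ℝ) 1 ∈ nhds t := Icc_mem_nhds ht.1 ht.2
  have hx := (γ.hxd t ht').hasDerivAt hn
  have hy := (γ.hyd t ht').hasDerivAt hn
  have h := sq_pos γ ht'
  have hs := Real.sqrt_pos.2 h
  have hs2 := Real.sq_sqrt h.le
  have hr := ((hx.pow 2).add (hy.pow 2)).sqrt h.ne'
  have := ((hx.mul_const e).add (hy.mul_const f)).div hr hs.ne'
  refine this.congr_deriv ?_
  simp only [Pi.add_apply, Pi.pow_apply]
  generalize Real.sqrt (γ.xd t ^ 2 + γ.yd t ^ 2) = r at *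
  rw [← hs2]
  field_simp
  push_cast
  have e1 : r ^ 4 = r ^ 2 * r ^ 2 := by ring
  simp only [hs2]
  ring

lemma angle_lam (γ : RegularCurve) {e f u v l : ℝ} (hef : e ^ 2 + f ^ 2 = 1)
    (hl0 : 0 ≤ l) (hl1 : l < 1) (hu : 0 ≤ u) (huv : u ≤ v) (hv : v ≤ 1) :
    |Real.arccos (l * C γ e f v) - Real.arccos (l * C γ e f u)| ≤ ∫ t in u..v, K γ t := by
  have hsub : Icc u v ⊆ Icc (0:ℝ) 1 := Icc_subset_Icc hu hv
  have hcont : ContinuousOn (fun t => Real.arccos (l * C γ e f t)) (Icc u v) :=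
    Real.continuous_arccos.comp_continuousOn
      (continuousOn_const.mul ((contC γ e f).mono hsub))
  have hint : IntegrableOn (K γ) (Icc u v) := by
    rw [← intervalIntegrable_iff_integrableOn_Icc_of_le huv]
    exact intK_sub γ ⟨hu, huv.trans hv⟩ ⟨hu.trans huv, hv⟩
  have key : ∀ t ∈ Ioo u v, ∃ D, HasDerivAt (fun t => Real.arccos (l * C γ e f t)) D t ∧
      |D| ≤ K γ t := by
    intro t ht
    have ht1 : t ∈ Ioo (0:ℝ) 1 := ⟨hu.trans_lt ht.1, ht.2.trans_le hv⟩
    have ht' := Ioo_subset_Icc_self ht1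
    have hd := (C_deriv γ e f ht1).const_mul l
    have hC := C_abs γ hef ht'
    have h1 := one_sub_C_sq γ hef ht'
    have hlt : l * C γ e f t < 1 := by nlinarith
    have hgt : -1 < l * C γ e f t := by nlinarith
    refine ⟨_, HasDerivAt.comp (h₂ := Real.arccos) t (Real.hasDerivAt_arccos hgt.ne' hlt.ne) hd, ?_⟩
    have hpos : 0 < 1 - (l * C γ e f t) ^ 2 := by nlinarith
    set S := (γ.xd t * f - γ.yd t * e) / Real.sqrt (γ.xd t ^ 2 + γ.yd t ^ 2) with hS
    have hle : |l * S| ≤ Real.sqrt (1 - (l * C γ e f t) ^ 2) := by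
      apply Real.abs_le_sqrt
      rw [mul_pow, mul_pow, ← h1]
      nlinarith
    have hsp := Real.sqrt_pos.2 hpos
    have hK : K γ t = |(γ.xd t * γ.ydd t - γ.xdd t * γ.yd t) / (γ.xd t ^ 2 + γ.yd t ^ 2)| := by
      unfold K
      rw [abs_div, abs_of_pos (sq_pos γ ht')]
    rw [hK]
    generalize (γ.xd t * γ.ydd t - γ.xdd t * γ.yd t) / (γ.xd t ^ 2 + γ.yd t ^ 2) = W
    have : -(1 / Real.sqrt (1 - (l * C γ e f t) ^ 2)) * (l * (W * S)) =
        -(W * ((l * S) / Real.sqrt (1 - (l * C γ e f t) ^ 2))) := by ring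
    rw [this, abs_neg, abs_mul]
    apply mul_le_of_le_one_right (abs_nonneg _)
    rw [abs_div, abs_of_pos hsp]
    exact (div_le_one hsp).2 hle
  choose! D hD hDK using key
  have h1 := intervalIntegral.sub_le_integral_of_hasDeriv_right_of_le huv hcont
    (fun t ht => (hD t ht).hasDerivWithinAt) hint (fun t ht => (abs_le.1 (hDK t ht)).2)
  have h2 := intervalIntegral.sub_le_integral_of_hasDeriv_right_of_le huv hcont.neg
    (fun t ht => (hD t ht).neg.hasDerivWithinAt) hint
    (fun t ht => by linarith [(abs_le.1 (hDK t ht)).1])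
  simp only [Pi.neg_apply] at h2
  rw [abs_le]
  constructor <;> linarith

lemma angle_le (γ : RegularCurve) {e f u v : ℝ} (hef : e ^ 2 + f ^ 2 = 1)
    (hu : 0 ≤ u) (huv : u ≤ v) (hv : v ≤ 1) :
    |Real.arccos (C γ e f v) - Real.arccos (C γ e f u)| ≤ ∫ t in u..v, K γ t := by
  have hc : Continuous (fun l : ℝ =>
      |Real.arccos (l * C γ e f v) - Real.arccos (l * C γ e f u)|) := by
    have := Real.continuous_arccos
    fun_prop
  have ht : Filter.Tendsto (fun l : ℝ =>
      |Real.arccos (l * C γ e f v) - Real.arccos (l * C γ e f u)|) (nhdsWithin 1 (Iio 1))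
      (nhds |Real.arccos (1 * C γ e f v) - Real.arccos (1 * C γ e f u)|) :=
    (hc.tendsto 1).mono_left nhdsWithin_le_nhds
  simp only [one_mul] at ht
  refine le_of_tendsto ht ?_
  have : Ioo (0:ℝ) 1 ∈ nhdsWithin (1:ℝ) (Iio 1) := Ioo_mem_nhdsLT zero_lt_one
  filter_upwards [this] with l hl
  exact angle_lam γ hef hl.1.le hl.2 hu huv hv

/-- Total curvature bound by the angles with the chord direction. -/
lemma chord (γ : RegularCurve) {e f R : ℝ} (hef : e ^ 2 + f ^ 2 = 1) (hR : 0 < R)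
    (hX : γ.x 1 - γ.x 0 = R * e) (hY : γ.y 1 - γ.y 0 = R * f) :
    Real.arccos (C γ e f 0) + Real.arccos (C γ e f 1) ≤ ∫ t in (0:ℝ)..1, K γ t := by
  by_contra hcon
  push Not at hcon
  have m0 : (0:ℝ) ∈ Icc (0:ℝ) 1 := by simp
  have m1 : (1:ℝ) ∈ Icc (0:ℝ) 1 := by simp
  have hV := abs_le.1 (angle_le γ hef le_rfl zero_le_one le_rfl)
  set V := ∫ t in (0:ℝ)..1, K γ t with hVdef
  set A := Real.arccos (C γ e f 0)
  set B := Real.arccos (C γ e f 1)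
  have hcont : ContinuousOn (fun t => ∫ s in (0:ℝ)..t, K γ s) (Icc 0 1) := by
    have := intervalIntegral.continuousOn_primitive_interval' (intK_sub γ m0 m1)
      (left_mem_uIcc)
    rwa [uIcc_of_le zero_le_one] at this
  have hivt : (V + A - B) / 2 ∈ (fun t => ∫ s in (0:ℝ)..t, K γ s) '' Icc 0 1 := by
    apply intermediate_value_Icc zero_le_one hcont
    simp only [intervalIntegral.integral_same]
    constructor <;> linarith
  obtain ⟨τ, hτ, hτV⟩ := hivt
  simp only at hτV
  have hadd : ∀ a ∈ Icc (0:ℝ) 1, ∀ b ∈ Icc (0:ℝ) 1, ∀ c ∈ Icc (0:ℝ) 1,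
      (∫ s in a..b, K γ s) + (∫ s in b..c, K γ s) = ∫ s in a..c, K γ s :=
    fun a ha b hb c hc => intervalIntegral.integral_add_adjacent_intervals
      (intK_sub γ ha hb) (intK_sub γ hb hc)
  have hτ1 := hadd 0 m0 τ hτ 1 m1
  have hpτ := sq_pos γ hτ
  have hrτ := Real.sqrt_pos.2 hpτ
  have hrτ2 := Real.sq_sqrt hpτ.le
  set g := γ.xd τ / Real.sqrt (γ.xd τ ^ 2 + γ.yd τ ^ 2) with hg
  set h := γ.yd τ / Real.sqrt (γ.xd τ ^ 2 + γ.yd τ ^ 2) with hh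
  have hgh : g ^ 2 + h ^ 2 = 1 := by
    rw [hg, hh, div_pow, div_pow, hrτ2, ← add_div, div_self hpτ.ne']
  have hCτ : C γ g h τ = 1 := by
    rw [← hgh]
    unfold C
    rw [add_div, mul_div_right_comm, mul_div_right_comm, ← hg, ← hh]
    ring
  have hpos : ∀ s ∈ Icc (0:ℝ) 1, C γ e f s < C γ g h s := by
    intro s hs
    have hCe := C_abs γ hef hs
    have hCg := C_abs γ hgh hs
    have hlt : Real.arccos (C γ g h s) < Real.arccos (C γ e f s) := by
      rcases le_total s τ with hsτ | hsτ
      · have a1 := abs_le.1 (angle_le γ hef le_rfl hs.1 hs.2)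
        have a2 := abs_le.1 (angle_le γ hgh hs.1 hsτ hτ.2)
        rw [hCτ, Real.arccos_one] at a2
        have a3 := hadd 0 m0 s hs τ hτ
        linarith [a1.1, a1.2, a2.1, a2.2]
      · have a1 := abs_le.1 (angle_le γ hef hs.1 hs.2 le_rfl)
        have a2 := abs_le.1 (angle_le γ hgh hτ.1 hsτ hs.2)
        rw [hCτ, Real.arccos_one] at a2
        have a3 := hadd τ hτ s hs 1 m1
        linarith [a1.1, a1.2, a2.1, a2.2]
    by_contra hc
    push Not at hc
    exact absurd (Real.arccos_le_arccos hc) (not_le.2 hlt)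
  have hmono : StrictMonoOn (fun t => γ.x t * (g - e) + γ.y t * (h - f)) (Icc 0 1) := by
    apply strictMonoOn_of_deriv_pos (convex_Icc 0 1)
    · exact ContinuousOn.add
        (ContinuousOn.mul (fun t ht => (γ.hx t ht).continuousWithinAt) continuousOn_const)
        (ContinuousOn.mul (fun t ht => (γ.hy t ht).continuousWithinAt) continuousOn_const)
    · intro t ht
      rw [interior_Icc] at ht
      have ht' := Ioo_subset_Icc_self ht
      have hn : Icc (0:ℝ) 1 ∈ nhds t := Icc_mem_nhds ht.1 ht.2
      have hd := (((γ.hx t ht').hasDerivAt hn).mul_const (g - e)).add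
        (((γ.hy t ht').hasDerivAt hn).mul_const (h - f))
      have hd2 := hd.deriv
      have : deriv (fun t => γ.x t * (g - e) + γ.y t * (h - f)) t =
        γ.xd t * (g - e) + γ.yd t * (h - f) := hd2
      rw [this]
      have hp := hpos t ht'
      unfold C at hp
      rw [div_lt_div_iff_of_pos_right (Real.sqrt_pos.2 (sq_pos γ ht'))] at hp
      linarith
  have hfin := hmono m0 m1 zero_lt_one
  simp only at hfin
  have h3 : 0 < R * (e * (g - e) + f * (h - f)) := by
    have : R * (e * (g - e) + f * (h - f)) =
      (γ.x 1 - γ.x 0) * (g - e) + (γ.y 1 - γ.y 0) * (h - f) := by rw [hX, hY]; ring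
    rw [this]; linarith
  have h4 := pos_of_mul_pos_right h3 hR.le
  nlinarith [sq_nonneg (e - g), sq_nonneg (f - h)]

lemma energy (γ : RegularCurve) :
    2 * ∫ t in (0:ℝ)..1, K γ t ≤ γ.elasticEnergy + γ.length := by
  unfold RegularCurve.elasticEnergy RegularCurve.length
  have hs : IntervalIntegrable (fun t => Real.sqrt (γ.xd t ^ 2 + γ.yd t ^ 2)) volume 0 1 := by
    apply ContinuousOn.intervalIntegrable
    rw [uIcc_of_le zero_le_one]
    exact cont_speed γ
  rw [← intervalIntegral.integral_add γ.intE hs, ← intervalIntegral.integral_const_mul]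
  apply intervalIntegral.integral_mono_on zero_le_one
  · exact (show IntervalIntegrable (K γ) volume 0 1 from γ.intK).const_mul 2
  · exact γ.intE.add hs
  · intro t ht
    have h := sq_pos γ ht
    have hs := Real.sqrt_pos.2 h
    have hs2 := Real.sq_sqrt h.le
    unfold K
    rw [← sq_abs (γ.xd t * γ.ydd t - γ.xdd t * γ.yd t)]
    generalize |γ.xd t * γ.ydd t - γ.xdd t * γ.yd t| = W
    generalize Real.sqrt (γ.xd t ^ 2 + γ.yd t ^ 2) = r at *
    rw [← hs2]
    have : W ^ 2 / ((r ^ 2) ^ 2 * r) + r - 2 * (W / r ^ 2) = (W / r ^ 2 - r) ^ 2 / r := by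
      field_simp
      ring
    have h5 : 0 ≤ (W / r ^ 2 - r) ^ 2 / r := by positivity
    linarith

lemma arccos_sum {a b c : ℝ} (h : a + b + c = 0) :
    Real.pi ≤ Real.arccos a + Real.arccos b + Real.arccos c := by
  have aux : ∀ a b c : ℝ, a + b + c = 0 → b ≤ 0 → c ≤ 0 →
      Real.pi ≤ Real.arccos a + Real.arccos b + Real.arccos c := by
    intro a b c _ hb hc
    have h1 := Real.arccos_nonneg a
    have h2 := Real.arccos_le_arccos hb
    have h3 := Real.arccos_le_arccos hc
    rw [Real.arccos_zero] at h2 h3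
    linarith
  have aux2 : ∀ a b c : ℝ, a + b + c = 0 → 0 ≤ b → 
      Real.pi ≤ Real.arccos a + Real.arccos b + Real.arccos c := by
    intro a b c h hb
    have h2 := Real.arccos_nonneg b
    have h1 : Real.arccos (-c) ≤ Real.arccos a := Real.arccos_le_arccos (by linarith)
    rw [Real.arccos_neg] at h1
    linarith
  rcases le_total 0 b with hb | hb
  · exact aux2 a b c h hb
  · rcases le_total 0 c with hc | hc
    · linarith [aux2 a c b (by linarith) hc]
    · exact aux a b c h hb hc

end ThetaAux

/-- Let `γ¹, γ², γ³ : [0,1] → ℝ²` be regular curves of class `H^2`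
forming a Theta-network: they share both endpoints (two distinct triple junctions),
and at each junction the three unit tangent vectors sum to zero (`120`-degree angles).
Then the penalized elastic energy satisfies
`F(Γ) = Σ ∫ ((k^i)² + 1) ds^i ≥ 4π`. -/
theorem theta_network_penalized_energy_ge_four_pi (Γ : Fin 3 → RegularCurve)
    (hjunc0x : ∀ i j, (Γ i).x 0 = (Γ j).x 0)
    (hjunc0y : ∀ i j, (Γ i).y 0 = (Γ j).y 0)
    (hjunc1x : ∀ i j, (Γ i).x 1 = (Γ j).x 1)
    (hjunc1y : ∀ i j, (Γ i).y 1 = (Γ j).y 1)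
    (hdistinct : ((Γ 0).x 0, (Γ 0).y 0) ≠ ((Γ 0).x 1, (Γ 0).y 1))
    (htan0x : ∑ i : Fin 3,
      (Γ i).xd 0 / Real.sqrt ((Γ i).xd 0 ^ 2 + (Γ i).yd 0 ^ 2) = 0)
    (htan0y : ∑ i : Fin 3,
      (Γ i).yd 0 / Real.sqrt ((Γ i).xd 0 ^ 2 + (Γ i).yd 0 ^ 2) = 0)
    (htan1x : ∑ i : Fin 3,
      (Γ i).xd 1 / Real.sqrt ((Γ i).xd 1 ^ 2 + (Γ i).yd 1 ^ 2) = 0)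
    (htan1y : ∑ i : Fin 3,
      (Γ i).yd 1 / Real.sqrt ((Γ i).xd 1 ^ 2 + (Γ i).yd 1 ^ 2) = 0) :
    4 * Real.pi ≤ ∑ i : Fin 3, ((Γ i).elasticEnergy + (Γ i).length) := by
  obtain ⟨R, hRdef⟩ : ∃ R, R = Real.sqrt (((Γ 0).x 1 - (Γ 0).x 0) ^ 2 +
    ((Γ 0).y 1 - (Γ 0).y 0) ^ 2) := ⟨_, rfl⟩
  have hpos : 0 < ((Γ 0).x 1 - (Γ 0).x 0) ^ 2 + ((Γ 0).y 1 - (Γ 0).y 0) ^ 2 := by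
    by_contra hc
    apply hdistinct
    have h1 := sq_nonneg ((Γ 0).x 1 - (Γ 0).x 0)
    have h2 := sq_nonneg ((Γ 0).y 1 - (Γ 0).y 0)
    have h3 : (Γ 0).x 1 - (Γ 0).x 0 = 0 := pow_eq_zero_iff (two_ne_zero) |>.1 (by linarith)
    have h4 : (Γ 0).y 1 - (Γ 0).y 0 = 0 := pow_eq_zero_iff (two_ne_zero) |>.1 (by linarith)
    rw [Prod.mk.injEq]
    constructor <;> linarith
  have hR : 0 < R := hRdef ▸ Real.sqrt_pos.2 hpos
  have hR2 : R ^ 2 = ((Γ 0).x 1 - (Γ 0).x 0) ^ 2 + ((Γ 0).y 1 - (Γ 0).y 0) ^ 2 := by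
    rw [hRdef, Real.sq_sqrt hpos.le]
  obtain ⟨e, he⟩ : ∃ e, e = ((Γ 0).x 1 - (Γ 0).x 0) / R := ⟨_, rfl⟩
  obtain ⟨f, hf⟩ : ∃ f, f = ((Γ 0).y 1 - (Γ 0).y 0) / R := ⟨_, rfl⟩
  have hef : e ^ 2 + f ^ 2 = 1 := by
    rw [he, hf, div_pow, div_pow, ← add_div, ← hR2, div_self (pow_pos hR 2).ne']
  have hXe : (Γ 0).x 1 - (Γ 0).x 0 = R * e := by rw [he]; field_simp
  have hYf : (Γ 0).y 1 - (Γ 0).y 0 = R * f := by rw [hf]; field_simp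
  have hch : ∀ i, 2 * (Real.arccos (ThetaAux.C (Γ i) e f 0) +
      Real.arccos (ThetaAux.C (Γ i) e f 1)) ≤ (Γ i).elasticEnergy + (Γ i).length := by
    intro i
    have h1 := ThetaAux.chord (Γ i) hef hR
      (by rw [hjunc1x i 0, hjunc0x i 0, hXe]) (by rw [hjunc1y i 0, hjunc0y i 0, hYf])
    have h2 := ThetaAux.energy (Γ i)
    linarith
  rw [Fin.sum_univ_three] at *
  have s0 : ThetaAux.C (Γ 0) e f 0 + ThetaAux.C (Γ 1) e f 0 + ThetaAux.C (Γ 2) e f 0 = 0 := by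
    unfold ThetaAux.C
    linear_combination e * htan0x + f * htan0y
  have s1 : ThetaAux.C (Γ 0) e f 1 + ThetaAux.C (Γ 1) e f 1 + ThetaAux.C (Γ 2) e f 1 = 0 := by
    unfold ThetaAux.C
    linear_combination e * htan1x + f * htan1y
  linarith [ThetaAux.arccos_sum s0, ThetaAux.arccos_sum s1, hch 0, hch 1, hch 2]
end

section
/- The infimum of the penalized elastic energy F(γ) = ∫_γ (k² + 1) ds over all drops, i.e. over all regular curves γ:[0,1]→ℝ² of class H² with γ(0)=γ(1), is attained: there exists a drop γ₀ with F(γ₀) ≤ F(γ) for every drop γ. -/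
noncomputable section DropAux

open MeasureTheory Set Filter Topology BoundedContinuousFunction

/-- Lebesgue measure on `(0,1]`. -/
abbrev dropMu : Measure ℝ := volume.restrict (Ioc (0:ℝ) 1)

/-- The Hilbert space of curvatures. -/
abbrev dropH : Type := Lp ℝ 2 dropMu

instance dropMu_prob : IsProbabilityMeasure dropMu := ⟨by simp⟩

lemma dropH_integrable (h : dropH) : Integrable h dropMu :=
  (Lp.memLp h).integrable (by norm_num)

lemma dropH_integral_abs_le (h : dropH) : ∫ s, ‖h s‖ ∂dropMu ≤ ‖h‖ := by
  have h1 : eLpNorm h 1 dropMu ≤ eLpNorm h 2 dropMu :=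
    eLpNorm_le_eLpNorm_of_exponent_le (by norm_num) (Lp.memLp h).1
  rw [integral_norm_eq_lintegral_enorm (Lp.memLp h).1, ← eLpNorm_one_eq_lintegral_enorm, Lp.norm_def]
  exact ENNReal.toReal_mono (Lp.memLp h).2.ne h1

/-- The angle function generated by a curvature. -/
def dropAng (h : ℝ → ℝ) (t : ℝ) : ℝ := ∫ s in (0:ℝ)..t, h s ∂dropMu

lemma dropAng_cont (h : dropH) : Continuous (dropAng h) :=
  (dropH_integrable h).continuous_primitive 0

lemma dropAng_bound (h : dropH) (t : ℝ) : |dropAng h t| ≤ ‖h‖ := by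
  refine le_trans ?_ (dropH_integral_abs_le h)
  rw [dropAng, ← Real.norm_eq_abs]
  refine (intervalIntegral.norm_integral_le_integral_norm_uIoc).trans ?_
  exact setIntegral_le_integral (dropH_integrable h).norm (ae_of_all _ fun _ => norm_nonneg _)

lemma dropAng_add (f g : dropH) (t : ℝ) : dropAng (f + g : dropH) t = dropAng f t + dropAng g t := by
  unfold dropAng
  rw [← intervalIntegral.integral_add (dropH_integrable f).intervalIntegrable
    (dropH_integrable g).intervalIntegrable]
  apply intervalIntegral.integral_congr_ae
  filter_upwards [Lp.coeFn_add f g] with s hs _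
  simpa using hs

lemma dropAng_smul (c : ℝ) (g : dropH) (t : ℝ) : dropAng (c • g : dropH) t = c * dropAng g t := by
  unfold dropAng
  rw [← intervalIntegral.integral_const_mul]
  apply intervalIntegral.integral_congr_ae
  filter_upwards [Lp.coeFn_smul c g] with s hs _
  simpa using hs

/-- The angle operator, multiplied by `I`, into bounded continuous functions. -/
def dropT : dropH →L[ℝ] (ℝ →ᵇ ℂ) :=
  LinearMap.mkContinuous
    { toFun := fun h => BoundedContinuousFunction.ofNormedAddCommGroup
        (fun t => (dropAng h t : ℂ) * Complex.I)
        ((Complex.continuous_ofReal.comp (dropAng_cont h)).mul continuous_const) ‖h‖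
        (fun t => by simpa using dropAng_bound h t)
      map_add' := fun f g => by
        ext t
        change ((dropAng (f + g : dropH) t : ℝ) : ℂ) * Complex.I = _ * Complex.I + _ * Complex.I
        rw [dropAng_add, Complex.ofReal_add, add_mul]
      map_smul' := fun c g => by
        ext t
        simp [dropAng_smul, mul_assoc] } 1
    (fun h => by
      rw [one_mul]
      refine (BoundedContinuousFunction.norm_le (norm_nonneg h)).2 fun t => ?_
      change ‖(dropAng h t : ℂ) * Complex.I‖ ≤ ‖h‖
      simpa using dropAng_bound h t)

lemma dropT_apply (h : dropH) (t : ℝ) : dropT h t = (dropAng h t : ℂ) * Complex.I := rfl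

/-- Integration over `(0,1]` as a functional. -/
def dropJ : (ℝ →ᵇ ℂ) →L[ℝ] ℂ :=
  LinearMap.mkContinuous
    { toFun := fun f => ∫ t, f t ∂dropMu
      map_add' := fun f g => integral_add (f.integrable _) (g.integrable _)
      map_smul' := fun c f => by
        simp only [BoundedContinuousFunction.coe_smul, integral_smul, RingHom.id_apply] } 1
    (fun f => by
      simpa using BoundedContinuousFunction.norm_integral_le_norm (μ := dropMu) f)

lemma dropJ_apply (f : ℝ →ᵇ ℂ) : dropJ f = ∫ t, f t ∂dropMu := rfl

lemma drop_exp_apply (f : ℝ →ᵇ ℂ) (t : ℝ) : NormedSpace.exp f t = Complex.exp (f t) := by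
  let e : (ℝ →ᵇ ℂ) →+* ℂ :=
    { toFun := fun f => f t, map_one' := rfl, map_zero' := rfl, map_add' := fun _ _ => rfl,
      map_mul' := fun _ _ => rfl }
  have := NormedSpace.map_exp e (by exact continuous_eval_const t) f
  rw [Complex.exp_eq_exp_ℂ]
  exact this

/-- The closing constraint. -/
def dropPhi (h : dropH) : ℂ := dropJ (NormedSpace.exp (dropT h))

lemma dropPhi_eq (h : dropH) :
    dropPhi h = ∫ t, Complex.exp ((dropAng h t : ℂ) * Complex.I) ∂dropMu := by
  rw [dropPhi, dropJ_apply]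
  simp_rw [drop_exp_apply, dropT_apply]

lemma dropPhi_strict (g : dropH) : HasStrictFDerivAt dropPhi
    (dropJ.comp ((NormedSpace.exp (dropT g) • (1 : (ℝ →ᵇ ℂ) →L[ℝ] (ℝ →ᵇ ℂ))).comp dropT)) g := by
  have h1 : HasStrictFDerivAt (NormedSpace.exp : (ℝ →ᵇ ℂ) → _) _ (dropT g) :=
    hasStrictFDerivAt_exp (𝕂 := ℝ)
  exact dropJ.hasStrictFDerivAt.comp g (h1.comp g dropT.hasStrictFDerivAt)

lemma dropPhi_deriv_apply (g h : dropH) :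
    (dropJ.comp ((NormedSpace.exp (dropT g) • (1 : (ℝ →ᵇ ℂ) →L[ℝ] (ℝ →ᵇ ℂ))).comp dropT)) h
      = ∫ t, Complex.exp ((dropAng g t : ℂ) * Complex.I) * ((dropAng h t : ℂ) * Complex.I)
        ∂dropMu := by
  have : (dropJ.comp ((NormedSpace.exp (dropT g) • (1 : (ℝ →ᵇ ℂ) →L[ℝ] (ℝ →ᵇ ℂ))).comp dropT)) h
      = dropJ (NormedSpace.exp (dropT g) * dropT h) := rfl
  rw [this, dropJ_apply]
  simp_rw [BoundedContinuousFunction.mul_apply, drop_exp_apply, dropT_apply]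

/-- The angle at a fixed parameter as a continuous functional. -/
def dropEv (t : ℝ) : dropH →L[ℝ] ℝ :=
  LinearMap.mkContinuous
    { toFun := fun h => dropAng h t
      map_add' := fun f g => dropAng_add f g t
      map_smul' := fun c g => dropAng_smul c g t } 1
    (fun h => by simpa using dropAng_bound h t)

/-- Weak sequential compactness of balls in the Hilbert space. -/
lemma drop_weak_compact (u : ℕ → dropH) (r : ℝ) (hu : ∀ n, ‖u n‖ ≤ r) :
    ∃ (g : dropH) (φ : ℕ → ℕ), StrictMono φ ∧
      ∀ ℓ : dropH →L[ℝ] ℝ, Tendsto (fun n => ℓ (u (φ n))) atTop (𝓝 (ℓ g)) := by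
  have : Fact ((2 : ENNReal) ≠ ⊤) := ⟨by norm_num⟩
  have hc := WeakDual.isSeqCompact_closedBall ℝ dropH 0 r
  let v : ℕ → WeakDual ℝ dropH := fun n =>
    StrongDual.toWeakDual (InnerProductSpace.toDual ℝ dropH (u n))
  have hv : ∀ n, v n ∈ (WeakDual.toStrongDual ⁻¹' Metric.closedBall (0 : StrongDual ℝ dropH) r) := by
    intro n
    simp only [mem_preimage, mem_closedBall_zero_iff]
    change ‖InnerProductSpace.toDual ℝ dropH (u n)‖ ≤ r
    rw [LinearIsometryEquiv.norm_map]
    exact hu n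
  obtain ⟨a, -, φ, hφ, hlim⟩ := hc hv
  refine ⟨(InnerProductSpace.toDual ℝ dropH).symm (WeakDual.toStrongDual a), φ, hφ, fun ℓ => ?_⟩
  have h1 := (WeakDual.eval_continuous (𝕜 := ℝ)
    ((InnerProductSpace.toDual ℝ dropH).symm ℓ)).tendsto a |>.comp hlim
  have e : ∀ x : dropH, ℓ x = inner ℝ x ((InnerProductSpace.toDual ℝ dropH).symm ℓ) := by
    intro x
    rw [real_inner_comm, InnerProductSpace.toDual_symm_apply]
  rw [e]
  simp_rw [e]
  rw [InnerProductSpace.toDual_symm_apply]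
  exact h1


lemma dropAng_toLp {f : ℝ → ℝ} (hf : MemLp f 2 dropMu) (t : ℝ) :
    dropAng (hf.toLp f : dropH) t = dropAng f t := by
  unfold dropAng
  apply intervalIntegral.integral_congr_ae
  filter_upwards [hf.coeFn_toLp] with s hs _ using hs

lemma dropAng_eq_set (f : ℝ → ℝ) {t : ℝ} (ht : t ∈ Icc (0:ℝ) 1) :
    dropAng f t = ∫ s in Ioc 0 t, f s := by
  rw [dropAng, intervalIntegral.integral_of_le ht.1, Measure.restrict_restrict measurableSet_Ioc,
    inter_eq_left.2 (Ioc_subset_Ioc_right ht.2)]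

lemma dropAng_eq (f : ℝ → ℝ) {t : ℝ} (ht : t ∈ Icc (0:ℝ) 1) :
    dropAng f t = ∫ s in (0:ℝ)..t, f s := by
  rw [dropAng_eq_set f ht, intervalIntegral.integral_of_le ht.1]

lemma drop_norm_sq (g : dropH) : ‖g‖ ^ 2 = ∫ t in (0:ℝ)..1, g t ^ 2 := by
  rw [intervalIntegral.integral_of_le zero_le_one, ← real_inner_self_eq_norm_sq, L2.inner_def]
  simp [sq]

lemma dropPhi_re_im (g : dropH) : dropPhi g =
    ((∫ t in (0:ℝ)..1, Real.cos (dropAng g t) : ℝ) : ℂ)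
      + ((∫ t in (0:ℝ)..1, Real.sin (dropAng g t) : ℝ) : ℂ) * Complex.I := by
  have hc := dropAng_cont g
  rw [dropPhi_eq, ← intervalIntegral.integral_of_le zero_le_one, ← intervalIntegral.integral_ofReal,
    ← intervalIntegral.integral_ofReal, ← intervalIntegral.integral_mul_const,
    ← intervalIntegral.integral_add]
  · refine intervalIntegral.integral_congr fun t _ => ?_
    simp [Complex.exp_mul_I]
  · apply Continuous.intervalIntegrable; fun_prop
  · apply Continuous.intervalIntegrable; fun_prop

lemma dropPhi_zero_iff (g : dropH) : dropPhi g = 0 ↔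
    (∫ t in (0:ℝ)..1, Real.cos (dropAng g t)) = 0 ∧
    (∫ t in (0:ℝ)..1, Real.sin (dropAng g t)) = 0 := by
  rw [dropPhi_re_im, Complex.ext_iff]
  simp

lemma dropPhi_nonempty : ∃ h : dropH, dropPhi h = 0 := by
  have hm : MemLp (fun _ : ℝ => 2 * Real.pi) 2 dropMu := memLp_const _
  refine ⟨hm.toLp _, ?_⟩
  rw [dropPhi_zero_iff]
  have e : ∀ t ∈ uIcc (0:ℝ) 1, dropAng (hm.toLp _ : dropH) t = 2 * Real.pi * t := by
    intro t ht
    rw [uIcc_of_le zero_le_one] at ht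
    rw [dropAng_toLp, dropAng_eq _ ht]
    simp
    ring
  have hp : 2 * Real.pi ≠ 0 := by positivity
  constructor
  · rw [intervalIntegral.integral_congr (g := fun t => Real.cos (2 * Real.pi * t))
      (fun t ht => by simp only [e t ht])]
    rw [intervalIntegral.integral_comp_mul_left (fun t => Real.cos t) hp]
    simp
  · rw [intervalIntegral.integral_congr (g := fun t => Real.sin (2 * Real.pi * t))
      (fun t ht => by simp only [e t ht])]
    rw [intervalIntegral.integral_comp_mul_left (fun t => Real.sin t) hp]
    simp

lemma drop_min : ∃ g : dropH, dropPhi g = 0 ∧ ∀ h : dropH, dropPhi h = 0 → ‖g‖ ≤ ‖h‖ := by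
  set S : Set ℝ := {r | ∃ h : dropH, dropPhi h = 0 ∧ ‖h‖ = r} with hS
  have hne : S.Nonempty := by
    obtain ⟨h, hh⟩ := dropPhi_nonempty
    exact ⟨_, h, hh, rfl⟩
  have hbd : BddBelow S := ⟨0, by rintro r ⟨h, -, rfl⟩; exact norm_nonneg _⟩
  obtain ⟨r, hanti, hlim, hr⟩ := exists_seq_tendsto_sInf hne hbd
  choose u hu0 hur using hr
  obtain ⟨g, φ, hφ, hw⟩ := drop_weak_compact u (r 0)
    (fun n => (hur n).le.trans (hanti (Nat.zero_le n)))
  have hg0 : dropPhi g = 0 := by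
    have h1 : Tendsto (fun n => dropPhi (u (φ n))) atTop (𝓝 (dropPhi g)) := by
      simp_rw [dropPhi_eq]
      refine tendsto_integral_of_dominated_convergence (fun _ => (1:ℝ)) ?_ ?_ ?_ ?_
      · intro n
        have := dropAng_cont (u (φ n))
        apply Continuous.aestronglyMeasurable
        fun_prop
      · exact integrable_const _
      · intro n
        exact ae_of_all _ fun t => by rw [Complex.norm_exp_ofReal_mul_I]
      · refine ae_of_all _ fun t => ?_
        have h2 : Tendsto (fun n => dropAng (u (φ n)) t) atTop (𝓝 (dropAng g t)) := hw (dropEv t)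
        have h3 : Continuous fun x : ℝ => Complex.exp ((x : ℂ) * Complex.I) := by fun_prop
        exact (h3.tendsto _).comp h2
    simp_rw [hu0] at h1
    exact (tendsto_nhds_unique h1 tendsto_const_nhds)
  refine ⟨g, hg0, fun h hh => ?_⟩
  refine le_trans ?_ (csInf_le hbd ⟨h, hh, rfl⟩)
  have h1 := hw (innerSL ℝ g)
  have h2 : Tendsto (fun n => ‖g‖ * r (φ n)) atTop (𝓝 (‖g‖ * sInf S)) :=
    (hlim.comp hφ.tendsto_atTop).const_mul _
  have h3 : ‖g‖ * ‖g‖ ≤ ‖g‖ * sInf S := by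
    have := le_of_tendsto_of_tendsto' h1 h2 (fun n => by
      rw [← hur]
      exact real_inner_le_norm g (u (φ n)))
    rwa [innerSL_apply_apply, real_inner_self_eq_norm_mul_norm] at this
  have h0 : 0 ≤ sInf S := Real.sInf_nonneg (by rintro r ⟨h, -, rfl⟩; exact norm_nonneg _)
  rcases (norm_nonneg g).eq_or_lt with h | h
  · rw [← h]; exact h0
  · exact le_of_mul_le_mul_left h3 h

/-- The primitive appearing in the Euler-Lagrange equation. -/
def dropQ (p : ℝ → ℝ) (a : ℝ) : ℝ := (∫ t in (0:ℝ)..a, t * p t) + a * ∫ t in a..1, p t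

lemma drop_hasDerivAt_tail {p : ℝ → ℝ} (hp : Continuous p) (a : ℝ) :
    HasDerivAt (fun a => ∫ t in a..1, p t) (-p a) a :=
  intervalIntegral.integral_hasDerivAt_left (hp.intervalIntegrable _ _)
    (hp.stronglyMeasurableAtFilter _ _) hp.continuousAt

lemma dropQ_hasDerivAt {p : ℝ → ℝ} (hp : Continuous p) (a : ℝ) :
    HasDerivAt (dropQ p) (∫ t in a..1, p t) a := by
  have hp' : Continuous fun t => t * p t := by fun_prop
  have h1 : HasDerivAt (fun a => ∫ t in (0:ℝ)..a, t * p t) (a * p a) a :=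
    intervalIntegral.integral_hasDerivAt_right (hp'.intervalIntegrable _ _)
      (hp'.stronglyMeasurableAtFilter _ _) hp'.continuousAt
  convert! h1.add ((hasDerivAt_id a).mul (drop_hasDerivAt_tail hp a)) using 1
  simp

lemma dropQ_eq {p : ℝ → ℝ} (hp : Continuous p) {a : ℝ} (ha : a ∈ Icc (0:ℝ) 1) :
    ∫ t in (0:ℝ)..1, min t a * p t = dropQ p a := by
  have hc : Continuous fun t => min t a * p t := by fun_prop
  rw [← intervalIntegral.integral_add_adjacent_intervals (b := a) (hc.intervalIntegrable _ _)
    (hc.intervalIntegrable _ _), dropQ, ← intervalIntegral.integral_const_mul]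
  congr 1
  · refine intervalIntegral.integral_congr fun t ht => ?_
    rw [uIcc_of_le ha.1] at ht
    simp only [min_eq_left ht.2]
  · refine intervalIntegral.integral_congr fun t ht => ?_
    rw [uIcc_of_le ha.2] at ht
    simp only [min_eq_right ht.1]

lemma drop_test (a : ℝ) (ha : a ∈ Icc (0:ℝ) 1) : ∃ h : dropH,
    (∀ t ∈ Icc (0:ℝ) 1, dropAng h t = min t a) ∧ ∀ g : dropH, inner ℝ g h = dropAng g a := by
  refine ⟨indicatorConstLp 2 (measurableSet_Ioc (a := (0:ℝ)) (b := a)) (measure_ne_top _ _) (1:ℝ),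
    ?_, ?_⟩
  · intro t ht
    rw [dropAng, intervalIntegral.integral_of_le ht.1]
    rw [setIntegral_indicatorConstLp measurableSet_Ioc, Ioc_inter_Ioc, measureReal_restrict_apply measurableSet_Ioc,
      Ioc_inter_Ioc]
    have : 0 ≤ min a t := le_min ha.1 ht.1
    have h1 : min a t ≤ 1 := (min_le_right _ _).trans ht.2
    simp [ha.1, ht.1, ht.2, min_comm]
  · intro g
    rw [real_inner_comm, L2.inner_indicatorConstLp_one, dropAng, intervalIntegral.integral_of_le ha.1]

lemma drop_regular : ∃ θ k : ℝ → ℝ, (∀ t, HasDerivAt θ (k t) t) ∧ Continuous k ∧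
    (∫ t in (0:ℝ)..1, Real.cos (θ t)) = 0 ∧ (∫ t in (0:ℝ)..1, Real.sin (θ t)) = 0 ∧
    ∀ h : ℝ → ℝ, MemLp h 2 (volume.restrict (Ioc (0:ℝ) 1)) →
      (∫ t in (0:ℝ)..1, Real.cos (∫ s in (0:ℝ)..t, h s)) = 0 →
      (∫ t in (0:ℝ)..1, Real.sin (∫ s in (0:ℝ)..t, h s)) = 0 →
      ∫ t in (0:ℝ)..1, k t ^ 2 ≤ ∫ t in (0:ℝ)..1, h t ^ 2 := by
  obtain ⟨g, hg0, hmin⟩ := drop_min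
  have hcont := dropAng_cont g
  have hext : IsLocalExtrOn (fun x : dropH => ‖x‖ ^ 2) {x | dropPhi x = dropPhi g} g := by
    left
    refine eventually_of_mem self_mem_nhdsWithin fun x hx => ?_
    have hx' : dropPhi x = 0 := by rw [← hg0]; exact hx
    exact pow_le_pow_left₀ (norm_nonneg _) (hmin x hx') 2
  obtain ⟨Λ, Λ₀, hΛ, heq⟩ := hext.exists_linear_map_of_hasStrictFDerivAt (dropPhi_strict g)
    (hasStrictFDerivAt_norm_sq g)
  set w : ℝ → ℂ := fun t => Complex.exp ((dropAng g t : ℂ) * Complex.I) with hw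
  have hwc : Continuous w := by fun_prop
  let L := LinearMap.toContinuousLinearMap Λ
  have hL : ∀ z, L z = Λ z := fun z => rfl
  set p : ℝ → ℝ := fun t => L (w t * Complex.I) with hp
  have hpc : Continuous p := L.continuous.comp (by fun_prop)
  have star : ∀ a ∈ Icc (0:ℝ) 1, dropQ p a + 2 * Λ₀ * dropAng g a = 0 := by
    intro a ha
    obtain ⟨h, hh1, hh2⟩ := drop_test a ha
    have h1 := heq h
    rw [dropPhi_deriv_apply] at h1
    have hint : Integrable (fun t => Complex.exp ((dropAng g t : ℂ) * Complex.I) *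
        ((dropAng h t : ℂ) * Complex.I)) dropMu := by
      have := dropAng_cont h
      have hc : Continuous (fun t => Complex.exp ((dropAng g t : ℂ) * Complex.I) *
        ((dropAng h t : ℂ) * Complex.I)) := by fun_prop
      exact (hc.intervalIntegrable 0 1).1
    rw [← hL, ← L.integral_comp_comm hint, ← intervalIntegral.integral_of_le zero_le_one,
      intervalIntegral.integral_congr (g := fun t => min t a * p t), dropQ_eq hpc ha] at h1
    · have h2 : ((2 • innerSL ℝ g) : dropH →L[ℝ] ℝ) h = 2 * dropAng g a := by
        rw [← hh2]; simp [two_mul]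
      rw [h2] at h1
      simp only [smul_eq_mul] at h1
      linarith
    · intro t ht
      rw [uIcc_of_le zero_le_one] at ht
      have e : Complex.exp ((dropAng g t : ℂ) * Complex.I) * ((dropAng h t : ℂ) * Complex.I)
          = (dropAng h t) • (w t * Complex.I) := by
        rw [Complex.real_smul, hw]; ring
      simp only [hp]
      rw [e, map_smul, smul_eq_mul, hh1 t ht]
  have hΛ0 : Λ₀ ≠ 0 := by
    intro h0
    have e1 : ∀ a ∈ Icc (0:ℝ) 1, dropQ p a = 0 := fun a ha => by simpa [h0] using star a ha
    have e2 : ∀ a ∈ Ioo (0:ℝ) 1, ∫ t in a..1, p t = 0 := by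
      intro a ha
      refine (dropQ_hasDerivAt hpc a).unique ((hasDerivAt_const a (0:ℝ)).congr_of_eventuallyEq ?_)
      filter_upwards [Ioo_mem_nhds ha.1 ha.2] with b hb using e1 b (Ioo_subset_Icc_self hb)
    have e3 : ∀ a ∈ Ioo (0:ℝ) 1, p a = 0 := by
      intro a ha
      have := (drop_hasDerivAt_tail hpc a).unique
        ((hasDerivAt_const a (0:ℝ)).congr_of_eventuallyEq
          (by filter_upwards [Ioo_mem_nhds ha.1 ha.2] with b hb using e2 b hb))
      linarith
    have hNc : Continuous fun t => L (w t) := L.continuous.comp hwc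
    have hN : ∫ t in (0:ℝ)..1, L (w t) = 0 := by
      rw [intervalIntegral.integral_of_le zero_le_one, L.integral_comp_comm
        (hwc.intervalIntegrable 0 1).1]
      rw [dropPhi_eq] at hg0
      rw [hw, hg0, map_zero]
    obtain ⟨c, hc, hc0⟩ := exists_hasDerivAt_eq_zero (f := fun b => ∫ t in (0:ℝ)..b, L (w t))
      (f' := fun t => L (w t)) zero_lt_one
      (intervalIntegral.continuous_primitive (fun _ _ => hNc.intervalIntegrable _ _) 0).continuousOn
      (by simp [hN])
      (fun x _ => intervalIntegral.integral_hasDerivAt_right (hNc.intervalIntegrable _ _)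
        (hNc.stronglyMeasurableAtFilter _ _) hNc.continuousAt)
    have hc1 := e3 c hc
    apply hΛ
    rw [Prod.mk_eq_zero]
    refine ⟨LinearMap.ext fun z => ?_, h0⟩
    have hwne : w c ≠ 0 := Complex.exp_ne_zero _
    have hz : z = (z / w c).re • w c + (z / w c).im • (w c * Complex.I) := by
      rw [Complex.real_smul, Complex.real_smul]
      conv_lhs => rw [← div_mul_cancel₀ z hwne, ← Complex.re_add_im (z / w c)]
      ring
    rw [hz, map_add, map_smul, map_smul, ← hL, ← hL]
    simp only [hp] at hc1
    rw [hc0, hc1]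
    simp
  let θ : ℝ → ℝ := fun a => -(dropQ p a) / (2 * Λ₀)
  let k : ℝ → ℝ := fun a => -(∫ t in a..1, p t) / (2 * Λ₀)
  have hθ : ∀ a ∈ Icc (0:ℝ) 1, θ a = dropAng g a := by
    intro a ha
    have := star a ha
    simp only [θ]
    rw [div_eq_iff (by positivity)]
    linarith
  have hder : ∀ t, HasDerivAt θ (k t) t := fun t => ((dropQ_hasDerivAt hpc t).neg).div_const _
  have hkc : Continuous k := by
    have : Continuous fun a => ∫ t in a..1, p t :=
      continuous_iff_continuousAt.2 fun a => (drop_hasDerivAt_tail hpc a).continuousAt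
    exact this.neg.div_const _
  have hc0 := (dropPhi_zero_iff g).1 hg0
  have hI : ∀ t ∈ uIcc (0:ℝ) 1, t ∈ Icc (0:ℝ) 1 := fun t ht => by
    rwa [uIcc_of_le zero_le_one] at ht
  refine ⟨θ, k, hder, hkc, ?_, ?_, ?_⟩
  · refine Eq.trans ?_ hc0.1
    exact intervalIntegral.integral_congr fun t ht => by simp only [hθ t (hI t ht)]
  · refine Eq.trans ?_ hc0.2
    exact intervalIntegral.integral_congr fun t ht => by simp only [hθ t (hI t ht)]
  · intro h hm h1 h2
    have hgi : IntervalIntegrable g volume 0 1 := by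
      rw [intervalIntegrable_iff_integrableOn_Ioc_of_le zero_le_one]
      exact dropH_integrable g
    have hk : ∫ t in (0:ℝ)..1, k t ^ 2 = ‖g‖ ^ 2 := by
      rw [drop_norm_sq]
      apply intervalIntegral.integral_congr_ae
      have hne : ∀ᵐ x : ℝ, x ≠ 1 := by simp [ae_iff, measure_singleton]
      filter_upwards [hgi.ae_hasDerivAt_integral, hne] with x hx hx1 hxI
      rw [uIoc_of_le zero_le_one] at hxI
      have hx01 : x ∈ Ioo (0:ℝ) 1 := ⟨hxI.1, lt_of_le_of_ne hxI.2 hx1⟩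
      have hd := hx (by rw [uIcc_of_le zero_le_one]; exact Ioo_subset_Icc_self hx01) 0 (by simp)
      have : g x = k x := by
        refine hd.unique ((hder x).congr_of_eventuallyEq ?_)
        filter_upwards [Ioo_mem_nhds hx01.1 hx01.2] with b hb
        have hb' := Ioo_subset_Icc_self hb
        rw [hθ b hb', dropAng_eq _ hb']
      rw [this]
    have hh : ∫ t in (0:ℝ)..1, h t ^ 2 = ‖(hm.toLp h : dropH)‖ ^ 2 := by
      rw [drop_norm_sq, intervalIntegral.integral_of_le zero_le_one,
        intervalIntegral.integral_of_le zero_le_one]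
      apply integral_congr_ae
      filter_upwards [hm.coeFn_toLp] with s hs
      rw [hs]
    rw [hk, hh]
    refine pow_le_pow_left₀ (norm_nonneg _) (hmin _ ?_) 2
    rw [dropPhi_zero_iff]
    constructor
    · refine Eq.trans ?_ h1
      exact intervalIntegral.integral_congr fun t ht => by
        simp only [dropAng_toLp, dropAng_eq h (hI t ht)]
    · refine Eq.trans ?_ h2
      exact intervalIntegral.integral_congr fun t ht => by
        simp only [dropAng_toLp, dropAng_eq h (hI t ht)]


lemma drop_ac_lip {f F : ℝ → ℝ} {a b : ℝ} (hf : AbsolutelyContinuousOnInterval f a b)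
    (hF : ∀ x y, |F x - F y| ≤ |x - y|) :
    AbsolutelyContinuousOnInterval (fun t => F (f t)) a b := by
  rw [absolutelyContinuousOnInterval_iff] at hf ⊢
  intro ε hε
  obtain ⟨δ, hδ, h⟩ := hf ε hε
  refine ⟨δ, hδ, fun E hE hs => lt_of_le_of_lt (Finset.sum_le_sum fun i _ => ?_) (h E hE hs)⟩
  exact hF _ _

lemma drop_ac_primitive {f : ℝ → ℝ} (c : ℝ) (hf : IntervalIntegrable f volume 0 1) :
    AbsolutelyContinuousOnInterval (fun t => c + ∫ s in (0:ℝ)..t, f s) 0 1 := by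
  have h1 := hf.absolutelyContinuousOnInterval_intervalIntegral (c := 0) (by simp)
  rw [absolutelyContinuousOnInterval_iff] at h1 ⊢
  simpa using h1

/-- If the unit tangent `(U, V)` satisfies the Frenet equations with integrable `κ`, then it is
a rotation of `(cos θ, sin θ)` with `θ = ∫ κ`. -/
lemma drop_frenet {U V κ : ℝ → ℝ} (hU : ContinuousOn U (Icc 0 1)) (hV : ContinuousOn V (Icc 0 1))
    (hκ : IntervalIntegrable κ volume 0 1)
    (hdU : ∀ t ∈ Ioo (0:ℝ) 1, HasDerivAt U (-(κ t * V t)) t)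
    (hdV : ∀ t ∈ Ioo (0:ℝ) 1, HasDerivAt V (κ t * U t) t)
    (hUV : U 0 ^ 2 + V 0 ^ 2 = 1) :
    ∀ t ∈ Icc (0:ℝ) 1, Real.cos (∫ s in (0:ℝ)..t, κ s) = U 0 * U t + V 0 * V t ∧
      Real.sin (∫ s in (0:ℝ)..t, κ s) = U 0 * V t - V 0 * U t := by
  have hu : uIcc (0:ℝ) 1 = Icc 0 1 := uIcc_of_le zero_le_one
  have iV : IntervalIntegrable (fun t => -(κ t * V t)) volume 0 1 :=
    (hκ.mul_continuousOn (by rwa [hu])).neg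
  have iU : IntervalIntegrable (fun t => κ t * U t) volume 0 1 :=
    hκ.mul_continuousOn (by rwa [hu])
  have hsub : ∀ t ∈ Icc (0:ℝ) 1, uIcc 0 t ⊆ uIcc (0:ℝ) 1 := by
    intro t ht
    rw [hu, uIcc_of_le ht.1]
    exact Icc_subset_Icc_right ht.2
  have eU : ∀ t ∈ Icc (0:ℝ) 1, U 0 + ∫ s in (0:ℝ)..t, -(κ s * V s) = U t := by
    intro t ht
    rw [intervalIntegral.integral_eq_sub_of_hasDerivAt_of_le ht.1
      (hU.mono (Icc_subset_Icc_right ht.2)) (fun x hx => hdU x ⟨hx.1, hx.2.trans_le ht.2⟩)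
      (iV.mono_set (hsub t ht))]
    ring
  have eV : ∀ t ∈ Icc (0:ℝ) 1, V 0 + ∫ s in (0:ℝ)..t, κ s * U s = V t := by
    intro t ht
    rw [intervalIntegral.integral_eq_sub_of_hasDerivAt_of_le ht.1
      (hV.mono (Icc_subset_Icc_right ht.2)) (fun x hx => hdV x ⟨hx.1, hx.2.trans_le ht.2⟩)
      (iU.mono_set (hsub t ht))]
    ring
  set θ : ℝ → ℝ := fun t => ∫ s in (0:ℝ)..t, κ s with hθ
  have aθ : AbsolutelyContinuousOnInterval θ 0 1 :=
    hκ.absolutelyContinuousOnInterval_intervalIntegral (by simp)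
  have ac := drop_ac_lip aθ (F := Real.cos) (fun x y => Real.abs_cos_sub_cos_le x y)
  have as := drop_ac_lip aθ (F := Real.sin) (fun x y => Real.abs_sin_sub_sin_le x y)
  have aU := drop_ac_primitive (U 0) iV
  have aV := drop_ac_primitive (V 0) iU
  have q1 := (aU.mul ac).add (aV.mul as)
  have q2 := (aV.mul ac).sub (aU.mul as)
  have dθ := hκ.ae_hasDerivAt_integral
  have dU := iV.ae_hasDerivAt_integral
  have dV := iU.ae_hasDerivAt_integral
  obtain ⟨C1, h1⟩ := q1.const_of_ae_hasDerivAt_zero (by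
    filter_upwards [dθ, dU, dV] with t k1 k2 k3 ht
    have z : (0:ℝ) ∈ uIcc (0:ℝ) 1 := by simp
    have m1 := k1 ht 0 z
    have m2 := (k2 ht 0 z).const_add (U 0)
    have m3 := (k3 ht 0 z).const_add (V 0)
    rw [hu] at ht
    convert! (m2.mul m1.cos).add (m3.mul m1.sin) using 1
    rw [eU t ht, eV t ht]
    ring)
  obtain ⟨C2, h2⟩ := q2.const_of_ae_hasDerivAt_zero (by
    filter_upwards [dθ, dU, dV] with t k1 k2 k3 ht
    have z : (0:ℝ) ∈ uIcc (0:ℝ) 1 := by simp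
    have m1 := k1 ht 0 z
    have m2 := (k2 ht 0 z).const_add (U 0)
    have m3 := (k3 ht 0 z).const_add (V 0)
    rw [hu] at ht
    convert! (m3.mul m1.cos).sub (m2.mul m1.sin) using 1
    rw [eU t ht, eV t ht]
    ring)
  have z : (0:ℝ) ∈ uIcc (0:ℝ) 1 := by simp
  have c1 := h1 0 z
  have c2 := h2 0 z
  simp [hθ] at c1 c2
  intro t ht
  have g1 := h1 t (by rwa [hu])
  have g2 := h2 t (by rwa [hu])
  have g0 := Real.sin_sq_add_cos_sq (θ t)
  simp only [Pi.add_apply, Pi.mul_apply, Pi.sub_apply] at g1 g2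
  rw [eU t ht, eV t ht, ← c1] at g1
  rw [eU t ht, eV t ht, ← c2] at g2
  have r1 : U t = U 0 * Real.cos (θ t) - V 0 * Real.sin (θ t) := by
    linear_combination (-U t) * g0 + Real.cos (θ t) * g1 - Real.sin (θ t) * g2
  have r2 : V t = U 0 * Real.sin (θ t) + V 0 * Real.cos (θ t) := by
    linear_combination (-V t) * g0 + Real.sin (θ t) * g1 + Real.cos (θ t) * g2
  constructor
  · change Real.cos (θ t) = _
    rw [r1, r2]
    linear_combination (-Real.cos (θ t)) * hUV
  · change Real.sin (θ t) = _
    rw [r1, r2]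
    linear_combination (-Real.sin (θ t)) * hUV

/-- Reparametrization by (normalized) arclength. -/
lemma drop_reparam {v κ : ℝ → ℝ} (hv : ContinuousOn v (Icc 0 1)) (hpos : ∀ t ∈ Icc (0:ℝ) 1, 0 < v t)
    (hκ : IntervalIntegrable κ volume 0 1)
    (hκ2 : IntervalIntegrable (fun t => κ t ^ 2 / v t) volume 0 1)
    (hcos : ∫ t in (0:ℝ)..1, v t * Real.cos (∫ s in (0:ℝ)..t, κ s) = 0)
    (hsin : ∫ t in (0:ℝ)..1, v t * Real.sin (∫ s in (0:ℝ)..t, κ s) = 0) :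
    ∃ h : ℝ → ℝ, MemLp h 2 (volume.restrict (Ioc (0:ℝ) 1)) ∧
      (∫ t in (0:ℝ)..1, Real.cos (∫ s in (0:ℝ)..t, h s)) = 0 ∧
      (∫ t in (0:ℝ)..1, Real.sin (∫ s in (0:ℝ)..t, h s)) = 0 ∧
      ∫ t in (0:ℝ)..1, h t ^ 2 = (∫ t in (0:ℝ)..1, κ t ^ 2 / v t) * ∫ t in (0:ℝ)..1, v t := by
  set w : ℝ → ℝ := IccExtend (zero_le_one' ℝ) ((Icc (0:ℝ) 1).restrict v) with hw
  have hwc : Continuous w := hv.restrict.Icc_extend'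
  have hwv : ∀ t ∈ Icc (0:ℝ) 1, w t = v t := fun t ht => by
    rw [hw, IccExtend_of_mem _ _ ht]; rfl
  have hwpos : ∀ t, 0 < w t := fun t => hpos _ (Subtype.mem _)
  set L := ∫ t in (0:ℝ)..1, v t with hL
  have hLw : L = ∫ t in (0:ℝ)..1, w t :=
    intervalIntegral.integral_congr fun t ht => (hwv t (by rwa [uIcc_of_le zero_le_one] at ht)).symm
  have hLpos : 0 < L := by
    rw [hLw]
    exact intervalIntegral.intervalIntegral_pos_of_pos (hwc.intervalIntegrable _ _) hwpos zero_lt_one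
  let s : ℝ → ℝ := fun t => (∫ r in (0:ℝ)..t, w r) / L
  have hs : ∀ t, HasDerivAt s (w t / L) t := fun t =>
    (intervalIntegral.integral_hasDerivAt_right (hwc.intervalIntegrable _ _)
      (hwc.stronglyMeasurableAtFilter _ _) hwc.continuousAt).div_const L
  have hsm : StrictMono s := strictMono_of_hasDerivAt_pos hs (fun t => div_pos (hwpos t) hLpos)
  have hsc : Continuous s := continuous_iff_continuousAt.2 fun t => (hs t).continuousAt
  have s0 : s 0 = 0 := by simp [s]
  have s1 : s 1 = 1 := by simp only [s]; rw [← hLw, div_self hLpos.ne']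
  have him : ∀ t, 0 ≤ t → Set.image s (Ioc 0 t) = Ioc 0 (s t) := by
    intro t ht
    apply Subset.antisymm
    · rintro _ ⟨r, hr, rfl⟩
      exact ⟨by rw [← s0]; exact hsm hr.1, hsm.monotone hr.2⟩
    · have := intermediate_value_Ioc ht hsc.continuousOn
      rwa [s0] at this
  have him1 : Set.image s (Ioc 0 1) = Ioc 0 1 := by rw [him 1 zero_le_one, s1]
  let φ := Function.invFun s
  have hφ : ∀ t, φ (s t) = t := Function.leftInverse_invFun hsm.injective
  have hsd : ∀ A : Set ℝ, ∀ t ∈ A, HasDerivWithinAt s (w t / L) A t :=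
    fun A t _ => (hs t).hasDerivWithinAt
  let h : ℝ → ℝ := fun σ => κ (φ σ) * L / w (φ σ)
  have habs : ∀ t, |w t / L| = w t / L := fun t => abs_of_pos (div_pos (hwpos t) hLpos)
  have k1 : ∀ t, |w t / L| • h (s t) = κ t := by
    intro t
    have := (hwpos t).ne'
    simp only [h, hφ, habs, smul_eq_mul]
    field_simp
  have k2 : ∀ t, |w t / L| • (h (s t)) ^ 2 = L * (κ t ^ 2 / w t) := by
    intro t
    have := (hwpos t).ne'
    simp only [h, hφ, habs, smul_eq_mul]
    field_simp
  have hI : ∀ t ∈ Ioc (0:ℝ) 1, t ∈ Icc (0:ℝ) 1 := fun t ht => Ioc_subset_Icc_self ht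
  have ang : ∀ t ∈ Icc (0:ℝ) 1, ∫ r in (0:ℝ)..(s t), h r = ∫ r in (0:ℝ)..t, κ r := by
    intro t ht
    rw [intervalIntegral.integral_of_le ht.1, intervalIntegral.integral_of_le
      (by rw [← s0]; exact hsm.monotone ht.1), ← him t ht.1,
      integral_image_eq_integral_abs_deriv_smul measurableSet_Ioc (hsd _) hsm.injective.injOn]
    simp_rw [k1]
  have chg : ∀ F : ℝ → ℝ, ∫ t in (0:ℝ)..1, F (∫ r in (0:ℝ)..t, h r)
      = (∫ t in (0:ℝ)..1, v t * F (∫ r in (0:ℝ)..t, κ r)) / L := by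
    intro F
    rw [intervalIntegral.integral_of_le zero_le_one, intervalIntegral.integral_of_le zero_le_one,
      ← integral_div]
    conv_lhs => rw [← him1]
    rw [integral_image_eq_integral_abs_deriv_smul measurableSet_Ioc (hsd _) hsm.injective.injOn]
    refine setIntegral_congr_fun measurableSet_Ioc fun t ht => ?_
    simp only [habs, ang t (hI t ht), smul_eq_mul]
    rw [hwv t (hI t ht)]
    ring
  refine ⟨h, ?_, ?_, ?_, ?_⟩
  · have i1 : IntegrableOn h (Ioc 0 1) := by
      rw [← him1, integrableOn_image_iff_integrableOn_abs_deriv_smul measurableSet_Ioc (hsd _)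
        hsm.injective.injOn]
      simp_rw [k1]
      exact hκ.1
    have i2 : IntegrableOn (fun t => h t ^ 2) (Ioc 0 1) := by
      rw [← him1, integrableOn_image_iff_integrableOn_abs_deriv_smul measurableSet_Ioc (hsd _)
        hsm.injective.injOn]
      simp_rw [k2]
      refine IntegrableOn.congr_fun (hκ2.1.const_mul L) (fun t ht => ?_) measurableSet_Ioc
      simp only [hwv t (hI t ht)]
    exact (memLp_two_iff_integrable_sq i1.aestronglyMeasurable).2 i2
  · rw [chg, hcos, zero_div]
  · rw [chg, hsin, zero_div]
  · rw [intervalIntegral.integral_of_le zero_le_one]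
    conv_lhs => rw [← him1]
    rw [integral_image_eq_integral_abs_deriv_smul measurableSet_Ioc (hsd _) hsm.injective.injOn,
      mul_comm, intervalIntegral.integral_of_le zero_le_one, ← integral_const_mul]
    refine setIntegral_congr_fun measurableSet_Ioc fun t ht => ?_
    simp only [k2]
    rw [hwv t (hI t ht)]

lemma drop_curve (γ : RegularCurve) (hx : γ.x 0 = γ.x 1) (hy : γ.y 0 = γ.y 1) :
    ∃ h : ℝ → ℝ, MemLp h 2 (volume.restrict (Ioc (0:ℝ) 1)) ∧
      (∫ t in (0:ℝ)..1, Real.cos (∫ s in (0:ℝ)..t, h s)) = 0 ∧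
      (∫ t in (0:ℝ)..1, Real.sin (∫ s in (0:ℝ)..t, h s)) = 0 ∧
      ∫ t in (0:ℝ)..1, h t ^ 2 = γ.elasticEnergy * γ.length := by
  have hu : uIcc (0:ℝ) 1 = Icc 0 1 := uIcc_of_le zero_le_one
  set v : ℝ → ℝ := fun t => Real.sqrt (γ.xd t ^ 2 + γ.yd t ^ 2) with hv
  set κ : ℝ → ℝ := fun t => (γ.xd t * γ.ydd t - γ.xdd t * γ.yd t) / (γ.xd t ^ 2 + γ.yd t ^ 2) with hκ
  have cxd : ContinuousOn γ.xd (Icc 0 1) := fun t ht => (γ.hxd t ht).continuousWithinAt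
  have cyd : ContinuousOn γ.yd (Icc 0 1) := fun t ht => (γ.hyd t ht).continuousWithinAt
  have cx : ContinuousOn γ.x (Icc 0 1) := fun t ht => (γ.hx t ht).continuousWithinAt
  have cy : ContinuousOn γ.y (Icc 0 1) := fun t ht => (γ.hy t ht).continuousWithinAt
  have hpos2 : ∀ t ∈ Icc (0:ℝ) 1, 0 < γ.xd t ^ 2 + γ.yd t ^ 2 := fun t ht =>
    lt_of_le_of_ne (by positivity) (γ.regular t ht).symm
  have cv : ContinuousOn v (Icc 0 1) := ((cxd.pow 2).add (cyd.pow 2)).sqrt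
  have hvpos : ∀ t ∈ Icc (0:ℝ) 1, 0 < v t := fun t ht => Real.sqrt_pos.2 (hpos2 t ht)
  have hv2 : ∀ t, v t ^ 2 = γ.xd t ^ 2 + γ.yd t ^ 2 := fun t => Real.sq_sqrt (by positivity)
  have hnhds : ∀ t ∈ Ioo (0:ℝ) 1, Icc (0:ℝ) 1 ∈ 𝓝 t := fun t ht => Icc_mem_nhds ht.1 ht.2
  have dx : ∀ t ∈ Ioo (0:ℝ) 1, HasDerivAt γ.x (γ.xd t) t := fun t ht =>
    (γ.hx t (Ioo_subset_Icc_self ht)).hasDerivAt (hnhds t ht)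
  have dy : ∀ t ∈ Ioo (0:ℝ) 1, HasDerivAt γ.y (γ.yd t) t := fun t ht =>
    (γ.hy t (Ioo_subset_Icc_self ht)).hasDerivAt (hnhds t ht)
  have dxd : ∀ t ∈ Ioo (0:ℝ) 1, HasDerivAt γ.xd (γ.xdd t) t := fun t ht =>
    (γ.hxd t (Ioo_subset_Icc_self ht)).hasDerivAt (hnhds t ht)
  have dyd : ∀ t ∈ Ioo (0:ℝ) 1, HasDerivAt γ.yd (γ.ydd t) t := fun t ht =>
    (γ.hyd t (Ioo_subset_Icc_self ht)).hasDerivAt (hnhds t ht)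
  have aeIoo : ∀ᵐ t ∂(volume.restrict (Ioc (0:ℝ) 1)), t ∈ Ioo (0:ℝ) 1 := by
    rw [← restrict_Ioo_eq_restrict_Ioc]
    exact ae_restrict_mem measurableSet_Ioo
  have mx : AEStronglyMeasurable γ.xd (volume.restrict (Ioc (0:ℝ) 1)) :=
    (cxd.mono Ioc_subset_Icc_self).aestronglyMeasurable measurableSet_Ioc
  have my : AEStronglyMeasurable γ.yd (volume.restrict (Ioc (0:ℝ) 1)) :=
    (cyd.mono Ioc_subset_Icc_self).aestronglyMeasurable measurableSet_Ioc
  have mxd : AEStronglyMeasurable γ.xdd (volume.restrict (Ioc (0:ℝ) 1)) := by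
    refine (measurable_deriv γ.xd).aestronglyMeasurable.congr ?_
    filter_upwards [aeIoo] with t ht using (dxd t ht).deriv
  have myd : AEStronglyMeasurable γ.ydd (volume.restrict (Ioc (0:ℝ) 1)) := by
    refine (measurable_deriv γ.yd).aestronglyMeasurable.congr ?_
    filter_upwards [aeIoo] with t ht using (dyd t ht).deriv
  have mκ : AEStronglyMeasurable κ (volume.restrict (Ioc (0:ℝ) 1)) :=
    (((mx.mul myd).sub (mxd.mul my)).aemeasurable.div
      ((mx.pow 2).add (my.pow 2)).aemeasurable).aestronglyMeasurable
  have iκ : IntervalIntegrable κ volume 0 1 := by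
    rw [intervalIntegrable_iff_integrableOn_Ioc_of_le zero_le_one]
    refine (integrable_norm_iff mκ).1 ?_
    refine γ.intK.1.congr (ae_of_all _ fun t => ?_)
    simp only [hκ, Real.norm_eq_abs, abs_div]
    rw [abs_of_nonneg (by positivity : 0 ≤ γ.xd t ^ 2 + γ.yd t ^ 2)]
  have eE : ∀ t, (γ.xd t * γ.ydd t - γ.xdd t * γ.yd t) ^ 2 /
      ((γ.xd t ^ 2 + γ.yd t ^ 2) ^ 2 * Real.sqrt (γ.xd t ^ 2 + γ.yd t ^ 2)) = κ t ^ 2 / v t := by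
    intro t
    simp only [hκ, hv]
    rw [div_pow, div_div]
  have iκ2 : IntervalIntegrable (fun t => κ t ^ 2 / v t) volume 0 1 := by
    have := γ.intE
    simp_rw [eE] at this
    exact this
  have dv : ∀ t ∈ Ioo (0:ℝ) 1,
      HasDerivAt v ((γ.xd t * γ.xdd t + γ.yd t * γ.ydd t) / v t) t := by
    intro t ht
    have := (((dxd t ht).pow 2).add ((dyd t ht).pow 2)).sqrt (hpos2 t (Ioo_subset_Icc_self ht)).ne'
    convert! this using 1
    have := (hvpos t (Ioo_subset_Icc_self ht)).ne'
    simp only [Pi.add_apply, Pi.pow_apply]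
    change _ = _ / (2 * v t)
    field_simp
    ring
  have fr := drop_frenet (U := fun t => γ.xd t / v t) (V := fun t => γ.yd t / v t) (κ := κ)
    (cxd.div cv fun t ht => (hvpos t ht).ne') (cyd.div cv fun t ht => (hvpos t ht).ne') iκ
    (fun t ht => by
      have hv0 := (hvpos t (Ioo_subset_Icc_self ht)).ne'
      convert! (dxd t ht).div (dv t ht) hv0 using 1
      simp only [hκ]
      rw [← hv2 t]
      field_simp
      rw [hv2 t]
      ring)
    (fun t ht => by
      have hv0 := (hvpos t (Ioo_subset_Icc_self ht)).ne'
      convert! (dyd t ht).div (dv t ht) hv0 using 1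
      simp only [hκ]
      rw [← hv2 t]
      field_simp
      rw [hv2 t]
      ring)
    (by
      have hv0 := (hvpos 0 (by simp)).ne'
      simp only [div_pow]
      rw [← add_div, ← hv2 0]
      exact div_self (pow_ne_zero 2 hv0))
  set A := γ.xd 0 / v 0
  set B := γ.yd 0 / v 0
  have ix : IntervalIntegrable γ.xd volume 0 1 := (by rwa [hu] : ContinuousOn γ.xd (uIcc 0 1)).intervalIntegrable
  have iy : IntervalIntegrable γ.yd volume 0 1 := (by rwa [hu] : ContinuousOn γ.yd (uIcc 0 1)).intervalIntegrable
  have zx : ∫ t in (0:ℝ)..1, γ.xd t = 0 := by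
    rw [intervalIntegral.integral_eq_sub_of_hasDerivAt_of_le zero_le_one cx dx ix, hx, sub_self]
  have zy : ∫ t in (0:ℝ)..1, γ.yd t = 0 := by
    rw [intervalIntegral.integral_eq_sub_of_hasDerivAt_of_le zero_le_one cy dy iy, hy, sub_self]
  have hc : ∫ t in (0:ℝ)..1, v t * Real.cos (∫ s in (0:ℝ)..t, κ s) = 0 := by
    rw [intervalIntegral.integral_congr (g := fun t => A * γ.xd t + B * γ.yd t),
      intervalIntegral.integral_add (ix.const_mul _) (iy.const_mul _),
      intervalIntegral.integral_const_mul, intervalIntegral.integral_const_mul, zx, zy]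
    · simp
    · intro t ht
      rw [hu] at ht
      have hv0 := (hvpos t ht).ne'
      simp only [(fr t ht).1]
      field_simp
  have hs : ∫ t in (0:ℝ)..1, v t * Real.sin (∫ s in (0:ℝ)..t, κ s) = 0 := by
    rw [intervalIntegral.integral_congr (g := fun t => A * γ.yd t - B * γ.xd t),
      intervalIntegral.integral_sub (iy.const_mul _) (ix.const_mul _),
      intervalIntegral.integral_const_mul, intervalIntegral.integral_const_mul, zx, zy]
    · simp
    · intro t ht
      rw [hu] at ht
      have hv0 := (hvpos t ht).ne'
      simp only [(fr t ht).2]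
      field_simp
  obtain ⟨h, h1, h2, h3, h4⟩ := drop_reparam cv hvpos iκ iκ2 hc hs
  refine ⟨h, h1, h2, h3, ?_⟩
  rw [h4, RegularCurve.elasticEnergy, RegularCurve.length]
  simp_rw [eE]
  rfl

lemma drop_pos {θ k : ℝ → ℝ} (hd : ∀ t, HasDerivAt θ (k t) t) (hk : Continuous k)
    (hc : (∫ t in (0:ℝ)..1, Real.cos (θ t)) = 0) (hs : (∫ t in (0:ℝ)..1, Real.sin (θ t)) = 0) :
    0 < ∫ t in (0:ℝ)..1, k t ^ 2 := by
  by_contra hcon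
  have hz : ∀ t ∈ Icc (0:ℝ) 1, k t = 0 := by
    intro t ht
    by_contra hne
    exact hcon (intervalIntegral.integral_pos zero_lt_one (hk.pow 2).continuousOn
      (fun x _ => sq_nonneg _) ⟨t, ht, by positivity⟩)
  have hconst : ∀ t ∈ Icc (0:ℝ) 1, θ t = θ 0 :=
    constant_of_has_deriv_right_zero (fun t _ => (hd t).continuousAt.continuousWithinAt)
      (fun t ht => by
        have := (hd t).hasDerivWithinAt (s := Ici t)
        rwa [hz t (Ico_subset_Icc_self ht)] at this)
  have hu : uIcc (0:ℝ) 1 = Icc 0 1 := uIcc_of_le zero_le_one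
  rw [intervalIntegral.integral_congr (g := fun _ => Real.cos (θ 0))
    (fun t ht => by simp only [hconst t (hu ▸ ht)])] at hc
  rw [intervalIntegral.integral_congr (g := fun _ => Real.sin (θ 0))
    (fun t ht => by simp only [hconst t (hu ▸ ht)])] at hs
  simp at hc hs
  have := Real.sin_sq_add_cos_sq (θ 0)
  rw [hc, hs] at this
  norm_num at this

lemma drop_exists {θ k : ℝ → ℝ} (hd : ∀ t, HasDerivAt θ (k t) t) (hk : Continuous k)
    (hc : (∫ t in (0:ℝ)..1, Real.cos (θ t)) = 0) (hs : (∫ t in (0:ℝ)..1, Real.sin (θ t)) = 0)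
    {l : ℝ} (hl : 0 < l) :
    ∃ γ : RegularCurve, (γ.x 0 = γ.x 1 ∧ γ.y 0 = γ.y 1) ∧
      γ.elasticEnergy = (∫ t in (0:ℝ)..1, k t ^ 2) / l ∧ γ.length = l := by
  have hθ : Continuous θ := continuous_iff_continuousAt.2 fun t => (hd t).continuousAt
  have cc : Continuous fun t => Real.cos (θ t) := by fun_prop
  have cs : Continuous fun t => Real.sin (θ t) := by fun_prop
  have n2 : ∀ t, (l * Real.cos (θ t)) ^ 2 + (l * Real.sin (θ t)) ^ 2 = l ^ 2 := by
    intro t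
    linear_combination l ^ 2 * Real.sin_sq_add_cos_sq (θ t)
  have cr : ∀ t, l * Real.cos (θ t) * (l * (Real.cos (θ t) * k t))
      - l * (-Real.sin (θ t) * k t) * (l * Real.sin (θ t)) = l ^ 2 * k t := by
    intro t
    linear_combination l ^ 2 * k t * Real.sin_sq_add_cos_sq (θ t)
  have sq : Real.sqrt (l ^ 2) = l := Real.sqrt_sq hl.le
  have e1 : ∀ t, (l ^ 2 * k t) ^ 2 / ((l ^ 2) ^ 2 * l) = k t ^ 2 / l := by
    intro t
    field_simp
  refine ⟨
    { x := fun t => l * ∫ s in (0:ℝ)..t, Real.cos (θ s)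
      y := fun t => l * ∫ s in (0:ℝ)..t, Real.sin (θ s)
      xd := fun t => l * Real.cos (θ t)
      yd := fun t => l * Real.sin (θ t)
      xdd := fun t => l * (-Real.sin (θ t) * k t)
      ydd := fun t => l * (Real.cos (θ t) * k t)
      hx := fun t _ => ((intervalIntegral.integral_hasDerivAt_right (cc.intervalIntegrable _ _)
        (cc.stronglyMeasurableAtFilter _ _) cc.continuousAt).const_mul l).hasDerivWithinAt
      hy := fun t _ => ((intervalIntegral.integral_hasDerivAt_right (cs.intervalIntegrable _ _)
        (cs.stronglyMeasurableAtFilter _ _) cs.continuousAt).const_mul l).hasDerivWithinAt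
      hxd := fun t _ => ((hd t).cos.const_mul l).hasDerivWithinAt
      hyd := fun t _ => ((hd t).sin.const_mul l).hasDerivWithinAt
      regular := fun t _ => by
        rw [n2]; positivity
      intE := by
        simp_rw [n2, cr, sq, e1]
        exact ((hk.pow 2).div_const l).intervalIntegrable _ _
      intK := by
        simp_rw [n2, cr]
        exact ((continuous_const.mul hk).abs.div_const _).intervalIntegrable _ _ }, ?_, ?_, ?_⟩
  · constructor
    · simp [hc]
    · simp [hs]
  · simp only [RegularCurve.elasticEnergy]
    simp_rw [n2, cr, sq, e1]
    rw [intervalIntegral.integral_div]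
  · simp only [RegularCurve.length]
    simp_rw [n2, sq]
    simp

end DropAux

/-- The infimum of the penalized elastic energy
`F = ∫ (k² + 1) ds = E + L` over all drops (regular `H^2` curves with
`γ(0) = γ(1)`, with no condition on the tangents there) is attained. -/
theorem exists_minimizing_drop :
    ∃ γ₀ : RegularCurve, (γ₀.x 0 = γ₀.x 1 ∧ γ₀.y 0 = γ₀.y 1) ∧
      ∀ γ : RegularCurve, (γ.x 0 = γ.x 1 ∧ γ.y 0 = γ.y 1) →
        γ₀.elasticEnergy + γ₀.length ≤ γ.elasticEnergy + γ.length := by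
  obtain ⟨θ, k, hd, hk, hc, hs, hmin⟩ := drop_regular
  have hm := drop_pos hd hk hc hs
  set m := ∫ t in (0:ℝ)..1, k t ^ 2 with hmdef
  have hr := Real.sqrt_pos.2 hm
  have hr2 : Real.sqrt m * Real.sqrt m = m := Real.mul_self_sqrt hm.le
  obtain ⟨γ₀, h0, hE, hL⟩ := drop_exists hd hk hc hs hr
  refine ⟨γ₀, h0, fun γ hγ => ?_⟩
  obtain ⟨h, h1, h2, h3, h4⟩ := drop_curve γ hγ.1 hγ.2
  have h5 : m ≤ γ.elasticEnergy * γ.length := by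
    rw [← h4]; exact hmin h h1 h2 h3
  have hE0 : 0 ≤ γ.elasticEnergy := by
    apply intervalIntegral.integral_nonneg zero_le_one
    intro t _
    positivity
  have hL0 : 0 ≤ γ.length := by
    apply intervalIntegral.integral_nonneg zero_le_one
    intro t _
    positivity
  have hE' : γ₀.elasticEnergy = Real.sqrt m := by
    rw [hE, ← hmdef, div_eq_iff hr.ne', hr2]
  rw [hE', hL]
  have := sq_nonneg (γ.elasticEnergy - γ.length)
  refine le_of_sq_le_sq ?_ (by positivity)
  nlinarith
end
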